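/- arXiv:2412.08105 — 4 statements merged into one kernel-verified Lean document; each statement's English description precedes it below -/
import Mathlib

section
/- Let G be an abelian group generated by a finite subset S with 1 ∉ S and S = S⁻¹, and let x ∈ S. Then at least one of the following holds: (a) G = ⟨x⟩, and Cay(G;S) has a hamiltonian path all of whose edges correspond to the generator x (a bijection v from {0,…,|G|−1} onto G if G is finite, or from ℤ onto G if G is infinite, with v(i)⁻¹·v(i+1) ∈ {x, x⁻¹} for all consecutive indices i, i+1); or (b) Cay(G;S) contains a consistently labelled spanning grid with an x-component, meaning: there are index sets I and J, each equal either to ℤ or to {0,1,…,m} for some m ≥ 1, a bijection φ : I × J → G, and for each pair of consecutive indices j, j+1 ∈ J an element s_j ∈ S with s_j ∉ {x, x⁻¹}, such that φ(i+1, j) = φ(i, j)·x for all consecutive i, i+1 ∈ I and all j ∈ J, and φ(i, j+1) = φ(i, j)·s_j for all i ∈ I and all consecutive j, j+1 ∈ J. -/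
/-!
If `x` generates `G`, then the powers of `x` form the path. Otherwise the group elements
`v j * x ^ i` form the grid, where `v` is a walk in `Cay(G; S \ {x, x⁻¹})` that visits every coset
of `⟨x⟩` exactly once.

Such a walk comes from a relative form of the Nash-Williams theorem that `Cay(G; S)` has a
hamiltonian path: for every homomorphism `f : G → H` with `f(S)` generating `H`, there is a walk
in `Cay(G; S)` whose image visits every element of `H` exactly once. The proof is by induction
on `S`, for all `f` simultaneously. If `y` is a generator, then the induction hypothesis for
`H ⧸ ⟨f y⟩` turns `H` into a grid `f (v j * y ^ i)`, and every grid has a hamiltonian path. It runs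
back and forth through the rows if these are finite. The plane `ℤ × ℤ` is the only grid without
finite rows or columns, and there the U-shaped layers `max |a| b = n` of the upper half-plane
and their mirror images in the lower half-plane serve as rows.
-/

open Set SimpleGraph

/-- Index sets of hamiltonian paths: all of `ℤ`, or a nonempty initial interval `{0, …, m}`. -/
def IsIndexInterval (I : Set ℤ) : Prop :=
  I = univ ∨ ∃ m : ℕ, I = Icc 0 (m : ℤ)

/-- The sequence `p`, restricted to the indices in `K`, is a walk in the graph `Γ`. A hamiltonian
path is such a sequence that is moreover a bijection of `K` onto the vertices. -/
def IsWalkOn {V : Type*} (Γ : SimpleGraph V) (K : Set ℤ) (p : ℤ → V) : Prop :=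
  ∀ t ∈ K, t + 1 ∈ K → Γ.Adj (p t) (p (t + 1))

lemma IsIndexInterval.eq_univ_or_exists_one_le {I : Set ℤ} (hI : IsIndexInterval I)
    (hnt : I.Nontrivial) : I = univ ∨ ∃ m : ℕ, 1 ≤ m ∧ I = Icc 0 (m : ℤ) := by
  obtain rfl | ⟨m, rfl⟩ := hI
  · exact Or.inl rfl
  · refine Or.inr ⟨m, Nat.one_le_iff_ne_zero.mpr ?_, rfl⟩
    rintro rfl
    simp at hnt

/-! ### Concatenating finite rows -/

lemma exists_int_partial_sums {M : Type*} [AddCommGroup M] (l : ℤ → M) :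
    ∃ σ : ℤ → M, σ 0 = 0 ∧ ∀ k, σ (k + 1) = σ k + l k := by
  refine ⟨fun k => ∑ i ∈ Finset.Ico 0 k, l i - ∑ i ∈ Finset.Ico k 0, l i, by simp, fun k => ?_⟩
  dsimp only
  rcases le_or_gt 0 k with hk | hk
  · rw [Finset.Ico_eq_empty_of_le hk, Finset.Ico_eq_empty_of_le (show 0 ≤ k + 1 by omega),
      ← Finset.insert_Ico_right_eq_Ico_add_one hk, Finset.sum_insert Finset.right_notMem_Ico]
    abel
  · rw [Finset.Ico_eq_empty_of_le hk.le, Finset.Ico_eq_empty_of_le (show k + 1 ≤ 0 by omega),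
      ← Finset.insert_Ico_add_one_left_eq_Ico hk, Finset.sum_insert (by simp)]
    abel

lemma eq_of_mem_Ico_of_monotone {α : Type*} [Preorder α] {τ : ℤ → α} (hτ : Monotone τ) {t : α}
    {k k' : ℤ} (h : t ∈ Ico (τ k) (τ (k + 1))) (h' : t ∈ Ico (τ k') (τ (k' + 1))) : k = k' := by
  have hle : k < k' + 1 := hτ.reflect_lt (h.1.trans_lt h'.2)
  have hge : k' < k + 1 := hτ.reflect_lt (h'.1.trans_lt h.2)
  omega

lemma exists_mem_Ico_of_strictMono {σ : ℤ → ℤ} (hσ : StrictMono σ) (t : ℤ) :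
    ∃ k, t ∈ Ico (σ k) (σ (k + 1)) := by
  induction t using Int.inductionOn' (b := σ 0) with
  | zero => exact ⟨0, le_rfl, hσ (by omega)⟩
  | succ t _ ih =>
    obtain ⟨k, h1, h2⟩ := ih
    have := hσ (show k + 1 < k + 1 + 1 by omega)
    by_cases h : t + 1 < σ (k + 1)
    · exact ⟨k, by omega, h⟩
    · exact ⟨k + 1, by omega, by omega⟩
  | pred t _ ih =>
    obtain ⟨k, h1, h2⟩ := ih
    have := hσ (show k - 1 < k by omega)
    by_cases h : σ k ≤ t - 1
    · exact ⟨k, h, by omega⟩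
    · exact ⟨k - 1, by omega, by rw [sub_add_cancel]; omega⟩

section Boustrophedon

/-- The points `(k, i)` in a union of horizontal rows, where the `k`-th row is `[a k, b k]`. -/
def rowPoints (I : Set ℤ) (a b : ℤ → ℤ) : Set (ℤ × ℤ) :=
  {q | q.1 ∈ I ∧ q.2 ∈ Icc (a q.1) (b q.1)}

lemma rowPoints_subset_univ (I : Set ℤ) (a b : ℤ → ℤ) : rowPoints I a b ⊆ rowPoints univ a b :=
  fun _ hq => ⟨trivial, hq.2⟩

/-- The position of a point when the rows `[a k, b k]` are traversed one after the other, even rows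
from left to right and odd rows from right to left; `σ k` is the position where the `k`-th row
starts. -/
def snakeRank (a b σ : ℤ → ℤ) (q : ℤ × ℤ) : ℤ :=
  σ q.1 + if Even q.1 then q.2 - a q.1 else b q.1 - q.2

variable {a b σ : ℤ → ℤ}

lemma snakeRank_mem_Ico (hσ : ∀ k, σ (k + 1) = σ k + (b k - a k + 1)) {q : ℤ × ℤ}
    (hq : q.2 ∈ Icc (a q.1) (b q.1)) : snakeRank a b σ q ∈ Ico (σ q.1) (σ (q.1 + 1)) := by
  obtain ⟨ha, hb⟩ := hq
  have := hσ q.1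
  unfold snakeRank
  constructor <;> split_ifs <;> omega

lemma bijOn_snakeRank (hab : ∀ k, a k ≤ b k) (hσ : ∀ k, σ (k + 1) = σ k + (b k - a k + 1)) :
    BijOn (snakeRank a b σ) (rowPoints univ a b) univ := by
  have hmono : StrictMono σ := strictMono_int_of_lt_succ fun k => by linarith [hσ k, hab k]
  refine ⟨mapsTo_univ _ _, ?_, fun t _ => ?_⟩
  · rintro ⟨k, i⟩ ⟨-, hi⟩ ⟨k', i'⟩ ⟨-, hi'⟩ h
    obtain rfl : k = k' := eq_of_mem_Ico_of_monotone hmono.monotone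
      (snakeRank_mem_Ico hσ hi) (h ▸ snakeRank_mem_Ico hσ hi')
    simp only [snakeRank] at h
    refine Prod.ext rfl ?_
    split_ifs at h <;> dsimp only <;> omega
  · obtain ⟨k, h1, h2⟩ := exists_mem_Ico_of_strictMono hmono t
    have := hσ k
    refine ⟨(k, if Even k then a k + (t - σ k) else b k - (t - σ k)), ⟨trivial, ?_⟩, ?_⟩
    · dsimp only [mem_Icc]
      split_ifs <;> constructor <;> omega
    · dsimp only [snakeRank]
      split_ifs <;> omega

lemma isIndexInterval_image_snakeRank {I : Set ℤ} (hI : IsIndexInterval I)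
    (hab : ∀ k, a k ≤ b k) (hσ0 : σ 0 = 0) (hσ : ∀ k, σ (k + 1) = σ k + (b k - a k + 1)) :
    IsIndexInterval (snakeRank a b σ '' rowPoints I a b) := by
  have hmono : StrictMono σ := strictMono_int_of_lt_succ fun k => by linarith [hσ k, hab k]
  obtain rfl | ⟨n, rfl⟩ := hI
  · exact Or.inl (bijOn_snakeRank hab hσ).image_eq
  · have hpos : 0 < σ (n + 1) := hσ0 ▸ hmono (by omega)
    refine Or.inr ⟨(σ (n + 1) - 1).toNat, Subset.antisymm ?_ fun t ht => ?_⟩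
    · rintro _ ⟨q, ⟨hk, hi⟩, rfl⟩
      have hr := snakeRank_mem_Ico hσ hi
      have h0 := hmono.monotone hk.1
      have hn := hmono.monotone (show q.1 + 1 ≤ n + 1 from by linarith [hk.2])
      constructor <;> linarith [hr.1, hr.2, Int.self_le_toNat (σ (n + 1) - 1)]
    · obtain ⟨q, ⟨-, hi⟩, rfl⟩ := (bijOn_snakeRank hab hσ).surjOn (mem_univ t)
      have hr := snakeRank_mem_Ico hσ hi
      have h0 : (0:ℤ) < q.1 + 1 := hmono.lt_iff_lt.mp (by rw [hσ0]; exact ht.1.trans_lt hr.2)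
      have hn : q.1 < n + 1 := hmono.lt_iff_lt.mp (by have := hr.1; have := ht.2; omega)
      exact ⟨q, ⟨⟨by omega, by omega⟩, hi⟩, rfl⟩

lemma adj_of_snakeRank_eq_add_one {V : Type*} {Γ : SimpleGraph V} {I : Set ℤ} {c : ℤ → ℤ → V}
    (hab : ∀ k, a k ≤ b k) (hσ : ∀ k, σ (k + 1) = σ k + (b k - a k + 1))
    (hrow : ∀ k ∈ I, ∀ i ∈ Ico (a k) (b k), Γ.Adj (c k i) (c k (i + 1)))
    (hleft : ∀ k ∈ I, k + 1 ∈ I → Γ.Adj (c k (a k)) (c (k + 1) (a (k + 1))))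
    (hright : ∀ k ∈ I, k + 1 ∈ I → Γ.Adj (c k (b k)) (c (k + 1) (b (k + 1))))
    {q q' : ℤ × ℤ} (hq : q ∈ rowPoints I a b) (hq' : q' ∈ rowPoints I a b)
    (h : snakeRank a b σ q' = snakeRank a b σ q + 1) :
    Γ.Adj (c q.1 q.2) (c q'.1 q'.2) := by
  obtain ⟨k, i⟩ := q
  obtain ⟨hk, hai, hib⟩ := hq
  dsimp only at hk hai hib
  have hnext : ∀ r : ℤ × ℤ, r.2 ∈ Icc (a r.1) (b r.1) →
      snakeRank a b σ r = snakeRank a b σ (k, i) + 1 → q' = r := fun r hr hrank =>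
    (bijOn_snakeRank hab hσ).injOn ⟨trivial, hq'.2⟩ ⟨trivial, hr⟩ (h.trans hrank.symm)
  have := hσ k
  have := hab (k + 1)
  by_cases hpar : Even k
  · have hpar' : ¬ Even (k + 1) := by simpa [Int.even_add_one] using hpar
    rcases hib.lt_or_eq with hlt | rfl
    · obtain rfl := hnext (k, i + 1) ⟨by dsimp only; omega, hlt⟩ (by simp only [snakeRank]; grind)
      exact hrow k hk i ⟨hai, hlt⟩
    · obtain rfl := hnext (k + 1, b (k + 1)) ⟨this, le_rfl⟩ (by simp only [snakeRank]; grind)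
      exact hright k hk hq'.1
  · have hpar' : Even (k + 1) := Int.even_add_one.mpr hpar
    rcases hai.lt_or_eq with hlt | rfl
    · obtain rfl := hnext (k, i - 1) ⟨by dsimp only; omega, by dsimp only; omega⟩
        (by simp only [snakeRank]; grind)
      simpa using (hrow k hk (i - 1) ⟨by omega, by omega⟩).symm
    · obtain rfl := hnext (k + 1, a (k + 1)) ⟨le_rfl, this⟩ (by simp only [snakeRank]; grind)
      exact hleft k hk hq'.1

theorem exists_boustrophedon {V : Type*} {Γ : SimpleGraph V} {I : Set ℤ} {c : ℤ → ℤ → V}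
    {A : Set V} (hI : IsIndexInterval I) (hab : ∀ k, a k ≤ b k)
    (hc : BijOn (fun q : ℤ × ℤ => c q.1 q.2) (rowPoints I a b) A)
    (hrow : ∀ k ∈ I, ∀ i ∈ Ico (a k) (b k), Γ.Adj (c k i) (c k (i + 1)))
    (hleft : ∀ k ∈ I, k + 1 ∈ I → Γ.Adj (c k (a k)) (c (k + 1) (a (k + 1))))
    (hright : ∀ k ∈ I, k + 1 ∈ I → Γ.Adj (c k (b k)) (c (k + 1) (b (k + 1)))) :
    ∃ K, IsIndexInterval K ∧ ∃ p : ℤ → V, BijOn p K A ∧ IsWalkOn Γ K p := by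
  obtain ⟨σ, hσ0, hσ⟩ := exists_int_partial_sums fun k => b k - a k + 1
  have hinj : InjOn (snakeRank a b σ) (rowPoints I a b) :=
    (bijOn_snakeRank hab hσ).injOn.mono (rowPoints_subset_univ I a b)
  have hinv := hinj.bijOn_image.invOn_invFunOn
  have hbij := hinj.bijOn_image.symm hinv.symm
  refine ⟨_, isIndexInterval_image_snakeRank hI hab hσ0 hσ, _, hc.comp hbij, fun t ht ht' => ?_⟩
  refine adj_of_snakeRank_eq_add_one hab hσ hrow hleft hright (hbij.mapsTo ht) (hbij.mapsTo ht') ?_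
  rw [hinv.2 ht, hinv.2 ht']

end Boustrophedon

/-! ### Grids -/

/-- The square grid on `ℤ × ℤ`: the cartesian product of two copies of the bi-infinite path. -/
noncomputable abbrev gridGraph : SimpleGraph (ℤ × ℤ) := hasse ℤ □ hasse ℤ

lemma gridGraph_adj {p q : ℤ × ℤ} :
    gridGraph.Adj p q ↔ (p.1 + 1 = q.1 ∨ q.1 + 1 = p.1) ∧ p.2 = q.2 ∨
      (p.2 + 1 = q.2 ∨ q.2 + 1 = p.2) ∧ p.1 = q.1 := by
  simp only [boxProd_adj, hasse_adj, Order.covBy_iff_add_one_eq]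

/-- The `n`-th U-shaped layer `max |x| y = n` of the upper half-plane `0 ≤ y`, parametrized from
`(-n, 0)` to `(n, 0)` by `-2 * n ≤ i ≤ 2 * n`. -/
def halfPlaneLayer (n i : ℤ) : ℤ × ℤ :=
  (max (-n) (min n i), min n (min (2 * n - i) (2 * n + i)))

lemma exists_halfPlaneLayer_eq {p : ℤ × ℤ} (hp : 0 ≤ p.2) :
    ∃ n i, i ∈ Icc (-(2 * n)) (2 * n) ∧ halfPlaneLayer n i = p := by
  obtain ⟨x, y⟩ := p
  simp only [halfPlaneLayer, mem_Icc, Prod.mk.injEq] at *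
  obtain h | h | ⟨h, h'⟩ : y ≤ x ∨ y ≤ -x ∨ x < y ∧ -x < y := by omega
  · exact ⟨x, 2 * x - y, by omega⟩
  · exact ⟨-x, 2 * x + y, by omega⟩
  · exact ⟨y, x, by omega⟩

/-- The rows of the plane: the `k`-th layer of the upper half-plane if `0 ≤ k`, and the mirror image
of the `(-1 - k)`-th layer in the lower half-plane otherwise. -/
def planeRow (k i : ℤ) : ℤ × ℤ :=
  let p := halfPlaneLayer (max k (-1 - k)) i
  if 0 ≤ k then p else (p.1, -1 - p.2)

lemma bijOn_planeRow : BijOn (fun q : ℤ × ℤ => planeRow q.1 q.2)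
    (rowPoints univ (fun k => -(2 * max k (-1 - k))) fun k => 2 * max k (-1 - k)) univ := by
  refine ⟨mapsTo_univ _ _, ?_, ?_⟩
  · rintro ⟨k, i⟩ ⟨-, h1, h2⟩ ⟨k', i'⟩ ⟨-, h1', h2'⟩ h
    simp only [planeRow, halfPlaneLayer, Prod.ext_iff] at *
    split_ifs at h <;> omega
  · rintro ⟨x, y⟩ -
    rcases le_or_gt 0 y with hy | hy
    · obtain ⟨n, i, hi, h⟩ := exists_halfPlaneLayer_eq (p := (x, y)) hy
      have hn : 0 ≤ n := by linarith [hi.1, hi.2]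
      have hk : max n (-1 - n) = n := by omega
      refine ⟨(n, i), ⟨trivial, by simpa only [hk] using hi⟩, ?_⟩
      simp only [planeRow, hk, h, hn, if_true]
    · obtain ⟨n, i, hi, h⟩ := exists_halfPlaneLayer_eq (p := (x, -1 - y)) (by dsimp only; omega)
      have hn : ¬ 0 ≤ -1 - n := by linarith [hi.1, hi.2]
      have hk : max (-1 - n) (-1 - (-1 - n)) = n := by omega
      refine ⟨(-1 - n, i), ⟨trivial, by simpa only [hk] using hi⟩, ?_⟩
      simp only [planeRow, hk, h, hn, if_false]
      rw [sub_sub_cancel]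

lemma exists_plane_path : ∃ K, IsIndexInterval K ∧
    ∃ p : ℤ → ℤ × ℤ, BijOn p K univ ∧ IsWalkOn gridGraph K p := by
  refine exists_boustrophedon (Or.inl rfl) (fun k => by omega) bijOn_planeRow ?_ ?_ ?_ <;> intros
  all_goals
    simp only [gridGraph_adj, planeRow, halfPlaneLayer] at *
    split_ifs <;> omega

lemma exists_grid_path {I J : Set ℤ} (hI : IsIndexInterval I) (hJ : IsIndexInterval J) :
    ∃ K, IsIndexInterval K ∧ ∃ p : ℤ → ℤ × ℤ, BijOn p K (I ×ˢ J) ∧ IsWalkOn gridGraph K p := by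
  obtain rfl | ⟨m, rfl⟩ := hJ
  · obtain rfl | ⟨n, rfl⟩ := hI
    · rw [univ_prod_univ]
      exact exists_plane_path
    · refine exists_boustrophedon (c := fun k i => (i, k)) (a := fun _ => 0) (b := fun _ => n)
        (Or.inl rfl) (fun _ => by omega) ?_ ?_ ?_ ?_
      · refine ⟨fun q hq => ⟨hq.2, hq.1⟩, Prod.swap_injective.injOn, fun q hq =>
          ⟨q.swap, ⟨hq.2, hq.1⟩, rfl⟩⟩
      all_goals simp
  · refine exists_boustrophedon (c := fun k i => (k, i)) (a := fun _ => 0) (b := fun _ => m)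
      hI (fun _ => by omega) ?_ ?_ ?_ ?_
    · exact bijOn_id _
    all_goals simp

/-! ### Powers of a group element -/

/-- A set of exponents representing every element of `⟨x⟩` exactly once: all of `ℤ` if `x` has
infinite order, and `{0, …, orderOf x - 1}` otherwise. -/
noncomputable def exponentRange {G : Type*} [Group G] (x : G) : Set ℤ :=
  if orderOf x = 0 then univ else Ico 0 (orderOf x : ℤ)

lemma isIndexInterval_exponentRange {G : Type*} [Group G] (x : G) :
    IsIndexInterval (exponentRange x) := by
  unfold exponentRange
  split_ifs with h
  · exact Or.inl rfl
  · refine Or.inr ⟨orderOf x - 1, ?_⟩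
    rw [Nat.cast_pred (Nat.pos_of_ne_zero h), Icc_sub_one_right_eq_Ico]

lemma bijOn_zpow_exponentRange {G : Type*} [Group G] (x : G) :
    BijOn (fun i : ℤ => x ^ i) (exponentRange x) (Subgroup.zpowers x) := by
  by_cases h0 : orderOf x = 0
  · have hinj := injective_zpow_iff_not_isOfFinOrder.mpr (orderOf_eq_zero_iff.mp h0)
    rw [exponentRange, if_pos h0]
    exact ⟨fun i _ => ⟨i, rfl⟩, hinj.injOn, fun _ ⟨i, hi⟩ => ⟨i, trivial, hi⟩⟩
  · rw [exponentRange, if_neg h0]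
    refine ⟨fun i _ => ⟨i, rfl⟩, fun i hi j hj hij => ?_, ?_⟩
    · have h := zpow_eq_zpow_iff_modEq.mp hij
      rwa [Int.ModEq, Int.emod_eq_of_lt hi.1 hi.2, Int.emod_eq_of_lt hj.1 hj.2] at h
    · rintro _ ⟨i, rfl⟩
      have hpos : (0 : ℤ) < orderOf x := by omega
      exact ⟨i % orderOf x, ⟨Int.emod_nonneg _ hpos.ne', Int.emod_lt_of_pos _ hpos⟩,
        zpow_mod_orderOf x i⟩

lemma bijOn_zpow_of_zpowers_eq_top {G : Type*} [Group G] {x : G} (hx : Subgroup.zpowers x = ⊤) :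
    BijOn (fun i : ℤ => x ^ i) (exponentRange x) univ := by
  simpa only [hx, Subgroup.coe_top] using bijOn_zpow_exponentRange x

lemma exponentRange_of_zpowers_eq_top {G : Type*} [Group G] {x : G}
    (hx : Subgroup.zpowers x = ⊤) :
    (Finite G ∧ exponentRange x = Icc 0 ((Nat.card G : ℤ) - 1)) ∨
      (Infinite G ∧ exponentRange x = univ) := by
  rw [exponentRange, orderOf_eq_card_of_zpowers_eq_top hx]
  rcases finite_or_infinite G with hG | hG
  · exact Or.inl ⟨hG, by rw [if_neg Nat.card_pos.ne', Icc_sub_one_right_eq_Ico]⟩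
  · exact Or.inr ⟨hG, by rw [if_pos Nat.card_eq_zero_of_infinite]⟩

lemma nontrivial_exponentRange {G : Type*} [Group G] {x : G} (hx : x ≠ 1) :
    (exponentRange x).Nontrivial := by
  refine nontrivial_of_image (fun i : ℤ => x ^ i) _ ?_
  rw [(bijOn_zpow_exponentRange x).image_eq]
  exact ⟨x, Subgroup.mem_zpowers x, 1, one_mem _, hx⟩

/-! ### Hamiltonian paths of abelian Cayley graphs -/

lemma bijOn_zpow_mul_of_bijOn_mk {H : Type*} [Group H] (y : H) {J : Set ℤ} {w : ℤ → H}
    (hw : BijOn (fun j => (w j : H ⧸ Subgroup.zpowers y)) J univ) :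
    BijOn (fun p : ℤ × ℤ => w p.2 * y ^ p.1) (exponentRange y ×ˢ J) univ := by
  refine ⟨mapsTo_univ _ _, ?_, fun h _ => ?_⟩
  · rintro ⟨i, j⟩ ⟨hi, hj⟩ ⟨i', j'⟩ ⟨hi', hj'⟩ h
    have hmk := congrArg (fun a : H => (a : H ⧸ Subgroup.zpowers y)) h
    simp only [QuotientGroup.mk_mul_of_mem _ (Subgroup.zpow_mem_zpowers y _)] at hmk
    obtain rfl := hw.injOn hj hj' hmk
    obtain rfl := (bijOn_zpow_exponentRange y).injOn hi hi' (mul_left_cancel h)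
    rfl
  · obtain ⟨j, hj, hjh⟩ := hw.surjOn (mem_univ (h : H ⧸ Subgroup.zpowers y))
    obtain ⟨i, hi, hih⟩ := (bijOn_zpow_exponentRange y).surjOn (QuotientGroup.eq.mp hjh)
    exact ⟨(i, j), ⟨hi, hj⟩, by dsimp only at hih ⊢; rw [hih, mul_inv_cancel_left]⟩

lemma closure_image_mk_eq_top {H : Type*} [Group H] {y : H} [(Subgroup.zpowers y).Normal]
    {T : Set H} (h : Subgroup.closure (insert y T) = ⊤) :
    Subgroup.closure ((QuotientGroup.mk' (Subgroup.zpowers y)) '' T) = ⊤ := by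
  rw [← MonoidHom.map_closure, ← Subgroup.map_top_of_surjective _ (QuotientGroup.mk'_surjective _),
    ← h, insert_eq, Subgroup.closure_union, Subgroup.map_sup, ← Subgroup.zpowers_eq_closure,
    QuotientGroup.map_mk'_self, bot_sup_eq]

lemma mulCayley_adj_of_gridGraph_adj {G : Type*} [CommGroup G] {S : Set G} {x : G} {v : ℤ → G}
    {I J : Set ℤ} (hinj : InjOn (fun p : ℤ × ℤ => v p.2 * x ^ p.1) (I ×ˢ J))
    (hv : IsWalkOn (mulCayley S) J v) {p q : ℤ × ℤ} (hp : p ∈ I ×ˢ J) (hq : q ∈ I ×ˢ J)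
    (hpq : gridGraph.Adj p q) :
    (mulCayley (insert x S)).Adj (v p.2 * x ^ p.1) (v q.2 * x ^ q.1) := by
  obtain ⟨i, j⟩ := p
  obtain ⟨i', j'⟩ := q
  have hne := hinj.ne hp hq hpq.ne
  rw [gridGraph_adj] at hpq
  dsimp only at hpq hne ⊢
  obtain ⟨rfl | rfl, rfl⟩ | ⟨rfl | rfl, rfl⟩ := hpq
  · exact (mulCayley_adj' _ _ _).mpr
      ⟨hne, x, mem_insert x S, Or.inl (by rw [zpow_add_one, mul_assoc])⟩
  · exact (mulCayley_adj' _ _ _).mpr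
      ⟨hne, x, mem_insert x S, Or.inr (by rw [zpow_add_one, mul_assoc])⟩
  · rw [mul_comm _ (x ^ i), mul_comm _ (x ^ i), mulCayley_adj_mul_iff_right]
    exact mulCayley_mono (subset_insert x S) (hv j hp.2 hq.2)
  · rw [mul_comm _ (x ^ i), mul_comm _ (x ^ i), mulCayley_adj_mul_iff_right]
    exact mulCayley_mono (subset_insert x S) (hv j' hq.2 hp.2).symm

theorem exists_walk_bijOn_of_closure_image_eq_top {G : Type*} [CommGroup G] {S : Set G}
    (hS : S.Finite) : ∀ {H : Type*} [CommGroup H] (f : G →* H), Subgroup.closure (f '' S) = ⊤ →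
      ∃ K, IsIndexInterval K ∧ ∃ v : ℤ → G,
        BijOn (fun t => f (v t)) K univ ∧ IsWalkOn (mulCayley S) K v := by
  induction S, hS using Set.Finite.induction_on with
  | empty =>
    intro H _ f hf
    have : Subsingleton H := by
      rwa [image_empty, Subgroup.closure_empty, subsingleton_iff_bot_eq_top,
        Subgroup.subsingleton_iff] at hf
    refine ⟨Icc 0 ((0 : ℕ) : ℤ), Or.inr ⟨0, rfl⟩, fun _ => 1, ?_, fun t ht ht' => ?_⟩
    · rw [Nat.cast_zero, Icc_self]
      exact ⟨mapsTo_univ _ _, injOn_singleton _ _, fun _ _ => ⟨0, rfl, Subsingleton.elim _ _⟩⟩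
    · have := ht.1
      have := ht'.2
      omega
  | @insert x S _ _ ih =>
    intro H _ f hf
    rw [image_insert_eq] at hf
    obtain ⟨J, hJ, v, hbij, hv⟩ := ih ((QuotientGroup.mk' (Subgroup.zpowers (f x))).comp f) (by
      rw [MonoidHom.coe_comp, image_comp]
      exact closure_image_mk_eq_top hf)
    obtain ⟨K, hK, p, hp, hadj⟩ := exists_grid_path (isIndexInterval_exponentRange (f x)) hJ
    have hgrid : BijOn (fun p : ℤ × ℤ => f (v p.2 * x ^ p.1)) (exponentRange (f x) ×ˢ J) univ := by
      simpa only [map_mul, map_zpow] using bijOn_zpow_mul_of_bijOn_mk (f x) hbij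
    refine ⟨K, hK, fun t => v (p t).2 * x ^ (p t).1, hgrid.comp hp, fun t ht ht' => ?_⟩
    exact mulCayley_adj_of_gridGraph_adj (hgrid.injOn.of_comp (g := f)) hv (hp.mapsTo ht)
      (hp.mapsTo ht') (hadj t ht ht')

/-! ### The spanning grid -/

lemma inv_mul_mem_of_mulCayley_adj {G : Type*} [Group G] {T : Set G} (hT : T⁻¹ = T) {u v : G}
    (h : (mulCayley T).Adj u v) : u⁻¹ * v ∈ T := by
  obtain ⟨-, h | h⟩ := (mulCayley_adj T u v).mp h
  · exact h
  · rwa [← hT, Set.mem_inv, mul_inv_rev, inv_inv]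

lemma inv_sdiff_pair_inv {G : Type*} [Group G] {S : Set G} (hS : S⁻¹ = S) (x : G) :
    (S \ {x, x⁻¹})⁻¹ = S \ {x, x⁻¹} := by
  have hpair : ({x, x⁻¹} : Set G)⁻¹ = {x, x⁻¹} := by
    rw [Set.inv_insert, Set.inv_singleton, inv_inv, pair_comm]
  rw [← Set.inv_preimage, preimage_sdiff, Set.inv_preimage, Set.inv_preimage, hS, hpair]

lemma closure_insert_sdiff_pair_inv {G : Type*} [Group G] (S : Set G) (x : G) :
    Subgroup.closure (insert x (S \ {x, x⁻¹})) = Subgroup.closure (insert x S) := by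
  refine le_antisymm (Subgroup.closure_mono (insert_subset_insert sdiff_subset)) ?_
  have hx : x ∈ Subgroup.closure (insert x (S \ {x, x⁻¹})) :=
    Subgroup.subset_closure (mem_insert x _)
  rw [Subgroup.closure_le]
  rintro g (rfl | hg)
  · exact hx
  · by_cases hgx : g ∈ ({x, x⁻¹} : Set G)
    · rcases hgx with rfl | rfl
      exacts [hx, inv_mem hx]
    · exact Subgroup.subset_closure (mem_insert_of_mem x ⟨hg, hgx⟩)

lemma nontrivial_of_bijOn_mk {G : Type*} [Group G] {N : Subgroup G} (hN : N ≠ ⊤) {ι : Type*}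
    {J : Set ι} {v : ι → G} (hv : BijOn (fun j => (v j : G ⧸ N)) J univ) : J.Nontrivial := by
  have : Nontrivial (G ⧸ N) := QuotientGroup.nontrivial_iff.mpr hN
  refine nontrivial_of_image (fun j => (v j : G ⧸ N)) _ ?_
  rw [hv.image_eq]
  exact nontrivial_univ

/-- Let `G` be an abelian group generated by a finite symmetric set `S`
with `1 ∉ S`, and let `x ∈ S`. Then either `G = ⟨x⟩` and `Cay(G;S)` has a hamiltonian
path all of whose edges are labelled `x^{±1}` (indexed by `{0,…,|G|-1}` if `G` is
finite and by `ℤ` otherwise), or `Cay(G;S)` contains a consistently labelled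
spanning grid with an `x`-component. -/
theorem abelian_spanning_grid_single
    {G : Type*} [CommGroup G] (S : Set G) (hSfin : S.Finite)
    (h1 : (1 : G) ∉ S) (hS : S⁻¹ = S) (hgen : Subgroup.closure S = ⊤)
    (x : G) (hx : x ∈ S) :
    -- (a) a hamiltonian path all of whose edges correspond to the generator `x`
    (Subgroup.closure ({x} : Set G) = ⊤ ∧
      ∃ (I : Set ℤ) (v : ℤ → G),
        ((Finite G ∧ I = Set.Icc 0 ((Nat.card G : ℤ) - 1)) ∨
          (Infinite G ∧ I = Set.univ)) ∧
        Set.BijOn v I Set.univ ∧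
        (∀ i : ℤ, i ∈ I → i + 1 ∈ I → (v i)⁻¹ * v (i + 1) ∈ ({x, x⁻¹} : Set G))) ∨
    -- (b) a consistently labelled spanning grid with an `x`-component
    (∃ (I J : Set ℤ) (φ : ℤ × ℤ → G) (s : ℤ → G),
      (I = Set.univ ∨ ∃ m : ℕ, 1 ≤ m ∧ I = Set.Icc 0 (m : ℤ)) ∧
      (J = Set.univ ∨ ∃ m : ℕ, 1 ≤ m ∧ J = Set.Icc 0 (m : ℤ)) ∧
      Set.BijOn φ (I ×ˢ J) Set.univ ∧
      (∀ j : ℤ, j ∈ J → j + 1 ∈ J → s j ∈ S ∧ s j ∉ ({x, x⁻¹} : Set G)) ∧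
      (∀ i j : ℤ, i ∈ I → i + 1 ∈ I → j ∈ J → φ (i + 1, j) = φ (i, j) * x) ∧
      (∀ i j : ℤ, i ∈ I → j ∈ J → j + 1 ∈ J → φ (i, j + 1) = φ (i, j) * s j)) := by
  by_cases htop : Subgroup.zpowers x = ⊤
  · refine Or.inl ⟨by rw [← Subgroup.zpowers_eq_closure, htop], exponentRange x, (x ^ ·),
      exponentRange_of_zpowers_eq_top htop, bijOn_zpow_of_zpowers_eq_top htop, fun i _ _ => ?_⟩
    simp [zpow_add_one]
  · right
    have hgen' : Subgroup.closure (insert x (S \ {x, x⁻¹})) = ⊤ := by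
      rw [closure_insert_sdiff_pair_inv, insert_eq_of_mem hx, hgen]
    obtain ⟨J, hJ, v, hv, hwalk⟩ := exists_walk_bijOn_of_closure_image_eq_top
      (hSfin.sdiff (t := {x, x⁻¹})) _ (closure_image_mk_eq_top hgen')
    have hx1 : x ≠ 1 := ne_of_mem_of_not_mem hx h1
    refine ⟨exponentRange x, J, fun p => v p.2 * x ^ p.1, fun j => (v j)⁻¹ * v (j + 1),
      (isIndexInterval_exponentRange x).eq_univ_or_exists_one_le (nontrivial_exponentRange hx1),
      hJ.eq_univ_or_exists_one_le (nontrivial_of_bijOn_mk htop hv), bijOn_zpow_mul_of_bijOn_mk x hv,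
      fun j hj hj' => inv_mul_mem_of_mulCayley_adj (inv_sdiff_pair_inv hS x) (hwalk j hj hj'),
      fun i j _ _ _ => ?_, fun i j _ _ _ => ?_⟩ <;> dsimp only
    · rw [zpow_add_one, mul_assoc]
    · rw [mul_right_comm, mul_inv_cancel_left]
end

section
/- Let G be an abelian group generated by a finite subset S with 1 ∉ S and S = S⁻¹, let x ∈ S, and assume there exists y ∈ S with y ∉ {x, x⁻¹}. Then Cay(G;S) has a hamiltonian path (a bijection v from {0,…,|G|−1} onto G if G is finite, or from ℤ onto G if G is infinite, with v(i)⁻¹·v(i+1) ∈ S for all consecutive indices) containing a useful x-triple: there is an index i such that v(i)⁻¹·v(i+1) ∈ {x, x⁻¹} and v(i+2)⁻¹·v(i+3) ∈ {x, x⁻¹}. Moreover, if the cyclic subgroup ⟨x⟩ is finite, the hamiltonian path can be chosen to contain a strongly useful x-triple: an index i with {v(i)⁻¹·v(i+1), v(i+2)⁻¹·v(i+3)} = {x, x⁻¹}. -/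
/-!
Let `w` be a walk in `Cay(G; S)` projecting to a hamiltonian path of `G / ⟨N, s⟩`, and let `s ∈ S`.
The elements `s ^ a * w b` represent each coset of `N` once as `(a, b)` runs over a grid whose sides
are the order of `s` modulo `N` and the length of `w` (either may be infinite), and moves in the
grid are edges of the Cayley graph. Hence a hamiltonian path of the grid gives a walk projecting to
a hamiltonian path of `G / N`, and such walks exist for every `N` by Noetherian induction.

If `⟨x⟩ ≠ G`, take `s = x` and `N = 1` in the last step: it suffices to find in the grid a
hamiltonian path with two horizontal moves that are one move apart, in opposite directions if `x`
has finite order. The boustrophedon order has this property if its rows are finite; if they are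
infinite, a spiral in the plane or a modification of the boustrophedon order by columns serves.

If `⟨x⟩ = G` is infinite, take the powers of `x` in order. If it is finite, write `y = x ^ k` and
reverse the last `k` of the powers `1, x, x², …`: the jump to the reversed part is a step `y`,
between a step `x` and a step `x⁻¹`.
-/

namespace UsefulTriple

/-- The integers `0, …, n - 1` that index a sequence of length `n`. Length `0` stands for a
two-sided infinite sequence, indexed by all of `ℤ`; this matches the value `0` that `Nat.card`,
`orderOf` and `Subgroup.index` take on infinite objects. -/
def indexSet (n : ℕ) : Set ℤ := {i | n = 0 ∨ 0 ≤ i ∧ i < n}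

theorem mem_indexSet {n : ℕ} {i : ℤ} : i ∈ indexSet n ↔ n = 0 ∨ 0 ≤ i ∧ i < n := Iff.rfl

theorem indexSet_zero : indexSet 0 = Set.univ := by simp [indexSet]

theorem indexSet_one : indexSet 1 = {0} := by
  ext i
  simp only [mem_indexSet, Set.mem_singleton_iff]
  omega

theorem indexSet_of_pos {n : ℕ} (hn : 0 < n) : indexSet n = Set.Icc 0 ((n : ℤ) - 1) := by
  ext i
  simp only [mem_indexSet, Set.mem_Icc]
  omega

theorem natCard_of_bijOn_indexSet {α : Type*} {n : ℕ} {v : ℤ → α}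
    (hv : Set.BijOn v (indexSet n) Set.univ) : Nat.card α = n := by
  rw [← Nat.card_univ, ← Nat.card_congr hv.equiv]
  rcases Nat.eq_zero_or_pos n with rfl | hn
  · simp [indexSet_zero]
  · simp [indexSet_of_pos hn]

theorem bijOn_zpow {G : Type*} [Group G] (a : G) :
    Set.BijOn (a ^ · : ℤ → G) (indexSet (orderOf a)) (Subgroup.zpowers a) := by
  have h_mem {i : ℤ} : i ∈ indexSet (orderOf a) ↔ i % orderOf a = i := by
    rw [mem_indexSet]
    refine ⟨?_, fun h => ?_⟩
    · rintro (h | ⟨h₀, h₁⟩)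
      · simp [h]
      · exact Int.emod_eq_of_lt h₀ h₁
    · rcases Nat.eq_zero_or_pos (orderOf a) with h₀ | h₀
      · exact .inl h₀
      · exact .inr ⟨h ▸ Int.emod_nonneg _ (by omega), h ▸ Int.emod_lt_of_pos _ (by omega)⟩
  refine ⟨fun i _ => Subgroup.zpow_mem_zpowers a i, fun i hi j hj hij => ?_, ?_⟩
  · rw [← h_mem.1 hi, ← h_mem.1 hj]
    exact zpow_eq_zpow_iff_modEq.1 hij
  · rintro _ ⟨i, rfl⟩
    exact ⟨i % orderOf a, h_mem.2 (Int.emod_emod_of_dvd _ dvd_rfl), zpow_mod_orderOf a i⟩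

/-- The sequence `v`, indexed by `indexSet n`, is a hamiltonian path of the subgraph of `Γ` induced
on `A`. -/
structure IsPathOnto {V : Type*} (Γ : SimpleGraph V) (A : Set V) (n : ℕ) (v : ℤ → V) : Prop where
  bijOn : Set.BijOn v (indexSet n) A
  adj : ∀ i ∈ indexSet n, i + 1 ∈ indexSet n → Γ.Adj (v i) (v (i + 1))

/-- A hamiltonian path of the `n × m` grid, where side `0` stands for `ℤ`. -/
abbrev IsGridPath (n m l : ℕ) (u : ℤ → ℤ × ℤ) : Prop :=
  IsPathOnto (SimpleGraph.hasse (ℤ × ℤ)) (indexSet n ×ˢ indexSet m) l u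

theorem grid_adj_iff {p q : ℤ × ℤ} :
    (SimpleGraph.hasse (ℤ × ℤ)).Adj p q ↔
      (q.1 = p.1 + 1 ∨ p.1 = q.1 + 1) ∧ p.2 = q.2 ∨
        p.1 = q.1 ∧ (q.2 = p.2 + 1 ∨ p.2 = q.2 + 1) := by
  simp only [SimpleGraph.hasse_prod, SimpleGraph.boxProd_adj, SimpleGraph.hasse_adj,
    Order.covBy_iff_add_one_eq]
  omega

theorem IsGridPath.swap {n m l : ℕ} {u : ℤ → ℤ × ℤ} (hu : IsGridPath n m l u) :
    IsGridPath m n l (Prod.swap ∘ u) where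
  bijOn := by
    refine Set.BijOn.comp ⟨fun p hp => hp.symm, Prod.swap_injective.injOn, fun p hp => ?_⟩ hu.bijOn
    exact ⟨p.swap, hp.symm, p.swap_swap⟩
  adj i hi hi' := by
    have h := hu.adj i hi hi'
    simp only [grid_adj_iff, Function.comp_apply, Prod.fst_swap, Prod.snd_swap] at h ⊢
    omega

/-- Among some three consecutive moves of `u`, the first and the third are horizontal, in the
directions `δ` and `ε`. -/
def HasHorizontalTriple (l : ℕ) (u : ℤ → ℤ × ℤ) (δ ε : ℤˣ) : Prop :=
  ∃ i ∈ indexSet l, i + 3 ∈ indexSet l ∧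
    u (i + 1) = u i + ((δ : ℤ), 0) ∧ u (i + 3) = u (i + 2) + ((ε : ℤ), 0)

section Snake

/-- The boustrophedon traversal of the rows `{0, …, n - 1} × {j}`, even rows running to the right
and odd rows to the left. -/
def snake (n : ℕ) (i : ℤ) : ℤ × ℤ :=
  (if i / n % 2 = 0 then i % n else n - 1 - i % n, i / n)

theorem snake_mul_add {n : ℕ} (q : ℤ) {r : ℤ} (h₀ : 0 ≤ r) (h₁ : r < n) :
    snake n (n * q + r) = (if q % 2 = 0 then r else n - 1 - r, q) := by
  have hdiv : (n * q + r) / n = q := by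
    rw [Int.mul_add_ediv_left _ _ (by omega), Int.ediv_eq_zero_of_lt h₀ h₁, add_zero]
  have hmod : (n * q + r) % n = r := by
    rw [Int.mul_add_emod_self_left, Int.emod_eq_of_lt h₀ h₁]
  simp only [snake, hdiv, hmod]

theorem snake_row_zero {n : ℕ} {r : ℤ} (h₀ : 0 ≤ r) (h₁ : r < n) : snake n r = (r, 0) := by
  simpa using snake_mul_add 0 h₀ h₁

theorem snake_row_one {n : ℕ} {r : ℤ} (h₀ : n ≤ r) (h₁ : r < 2 * n) :
    snake n r = (2 * n - 1 - r, 1) := by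
  have h := snake_mul_add (n := n) 1 (sub_nonneg.2 h₀) (by omega)
  simp only [mul_one, add_sub_cancel] at h
  rw [h, if_neg (by omega), Prod.mk.injEq]
  omega

theorem snake_row_two {n : ℕ} {r : ℤ} (h₀ : 2 * n ≤ r) (h₁ : r < 3 * n) :
    snake n r = (r - 2 * n, 2) := by
  have h := snake_mul_add (n := n) 2 (sub_nonneg.2 h₀) (by omega)
  rw [mul_comm, add_sub_cancel] at h
  simpa using h

theorem exists_eq_mul_add {n : ℕ} (hn : 0 < n) (i : ℤ) :
    ∃ q r : ℤ, 0 ≤ r ∧ r < n ∧ i = n * q + r :=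
  ⟨i / n, i % n, Int.emod_nonneg _ (by omega), Int.emod_lt_of_pos _ (by omega),
    (Int.mul_ediv_add_emod i n).symm⟩

theorem mul_add_mem_indexSet {n m : ℕ} {q r : ℤ} (h₀ : 0 ≤ r) (h₁ : r < n) :
    n * q + r ∈ indexSet (n * m) ↔ q ∈ indexSet m := by
  rcases Nat.eq_zero_or_pos m with rfl | hm
  · simp [indexSet_zero]
  have hn : (0 : ℤ) < n := by omega
  simp only [mem_indexSet, Nat.mul_eq_zero, Nat.cast_mul]
  constructor
  · rintro (h | h)
    · omega
    · exact .inr ⟨by by_contra! h'; nlinarith, by by_contra! h'; nlinarith⟩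
  · rintro (h | h)
    · omega
    · exact .inr ⟨by nlinarith, by nlinarith⟩

theorem bijOn_snake {n : ℕ} (hn : 0 < n) (m : ℕ) :
    Set.BijOn (snake n) (indexSet (n * m)) (indexSet n ×ˢ indexSet m) := by
  refine ⟨fun i hi => ?_, fun i _ j _ hij => ?_, ?_⟩
  · obtain ⟨q, r, h₀, h₁, rfl⟩ := exists_eq_mul_add hn i
    rw [mul_add_mem_indexSet h₀ h₁] at hi
    refine ⟨?_, ?_⟩
    · simp only [snake_mul_add q h₀ h₁, mem_indexSet]
      split_ifs <;> omega
    · rwa [snake_mul_add q h₀ h₁]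
  · obtain ⟨q, r, h₀, h₁, rfl⟩ := exists_eq_mul_add hn i
    obtain ⟨q', r', h₀', h₁', rfl⟩ := exists_eq_mul_add hn j
    rw [snake_mul_add q h₀ h₁, snake_mul_add q' h₀' h₁', Prod.mk.injEq] at hij
    obtain ⟨hr, rfl⟩ := hij
    split_ifs at hr <;> omega
  · rintro ⟨a, b⟩ ⟨ha, hb⟩
    simp only [mem_indexSet, hn.ne', false_or] at ha
    by_cases h : b % 2 = 0
    · refine ⟨n * b + a, (mul_add_mem_indexSet ha.1 ha.2).2 hb, ?_⟩
      rw [snake_mul_add b ha.1 ha.2, if_pos h]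
    · refine ⟨n * b + (n - 1 - a), (mul_add_mem_indexSet (by omega) (by omega)).2 hb, ?_⟩
      rw [snake_mul_add b (by omega) (by omega), if_neg h, sub_sub_cancel]

theorem snake_adj {n : ℕ} (hn : 0 < n) (i : ℤ) :
    (SimpleGraph.hasse (ℤ × ℤ)).Adj (snake n i) (snake n (i + 1)) := by
  obtain ⟨q, r, h₀, h₁, rfl⟩ := exists_eq_mul_add hn i
  rw [grid_adj_iff, snake_mul_add q h₀ h₁]
  by_cases h : r + 1 < n
  · rw [add_assoc, snake_mul_add q (by omega) h]
    split_ifs <;> omega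
  · have hnext : n * q + r + 1 = n * (q + 1) + 0 := by linear_combination (by omega : r + 1 = n)
    rw [hnext, snake_mul_add (q + 1) le_rfl (by omega)]
    split_ifs <;> omega

theorem isGridPath_snake {n : ℕ} (hn : 0 < n) (m : ℕ) : IsGridPath n m (n * m) (snake n) where
  bijOn := bijOn_snake hn m
  adj i _ _ := snake_adj hn i

theorem hasHorizontalTriple_snake {n m : ℕ} (hn : 2 ≤ n) (hm : m ≠ 1) :
    HasHorizontalTriple (n * m) (snake n) 1 (-1) := by
  have hmem {r : ℤ} (h₀ : 0 ≤ r) (h₁ : r < 2 * n) : r ∈ indexSet (n * m) := by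
    rcases Nat.eq_zero_or_pos m with rfl | hm₀
    · simp [indexSet_zero]
    · exact .inr ⟨h₀, by push_cast; nlinarith [(by omega : (2 : ℤ) ≤ m)]⟩
  refine ⟨n - 2, hmem (by omega) (by omega), hmem (by omega) (by omega), ?_, ?_⟩
  · rw [snake_row_zero (by omega) (by omega), snake_row_zero (by omega) (by omega)]
    simp only [Units.val_one, Prod.mk_add_mk, add_zero]
  · rw [snake_row_one (by omega) (by omega), snake_row_one (by omega) (by omega)]
    simp only [Prod.mk_add_mk, Prod.mk.injEq, Units.val_neg, Units.val_one]
    omega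

end Snake

section Strip

/-- A reordering of the positions along `snake m` (for `m ≥ 3`). It cuts the four positions
`m - 2, …, m + 1` around the first turn out of the sequence, and inserts them, as
`m + 1, m - 2, m - 1, m`, between the positions `3 m - 2` and `3 m - 1` at the end of row `2`. -/
def splice (m : ℕ) (i : ℤ) : ℤ :=
  if i < m - 2 ∨ 3 * m - 1 ≤ i then i
  else if i < 3 * m - 5 then i + 4
  else if i = 3 * m - 5 then m + 1
  else i - 2 * m + 2

theorem bijective_splice {m : ℕ} (hm : 3 ≤ m) : Function.Bijective (splice m) := by
  refine ⟨fun i j hij => ?_, fun j => ?_⟩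
  · simp only [splice] at hij
    split_ifs at hij <;> omega
  · simp only [splice]
    rcases (by omega : (j < m - 2 ∨ 3 * m - 1 ≤ j) ∨ j = m + 1 ∨
      (m - 2 ≤ j ∧ j ≤ m) ∨ (m + 2 ≤ j ∧ j < 3 * m - 1)) with h | rfl | h | h
    · exact ⟨j, if_pos h⟩
    · exact ⟨3 * m - 5, by split_ifs <;> omega⟩
    · exact ⟨j + 2 * m - 2, by split_ifs <;> omega⟩
    · exact ⟨j - 4, by split_ifs <;> omega⟩

theorem splice_add_one {m : ℕ} (hm : 3 ≤ m) (i : ℤ) :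
    splice m (i + 1) = splice m i + 1 ∨
      (splice m i = m - 3 ∧ splice m (i + 1) = m + 2) ∨
      (splice m i = 3 * m - 2 ∧ splice m (i + 1) = m + 1) ∨
      (splice m i = m + 1 ∧ splice m (i + 1) = m - 2) ∨
      (splice m i = m ∧ splice m (i + 1) = 3 * m - 1) := by
  simp only [splice]
  split_ifs <;> omega

/-- The `ℤ × m` strip path for `m ≥ 3`: the column-by-column snake, spliced so that its two
horizontal moves next to the cut are a vertical move apart. -/
def strip (m : ℕ) : ℤ → ℤ × ℤ := Prod.swap ∘ snake m ∘ splice m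

theorem isGridPath_strip {m : ℕ} (hm : 3 ≤ m) : IsGridPath 0 m 0 (strip m) := by
  refine IsGridPath.swap ⟨?_, fun i _ _ => ?_⟩
  · refine (bijOn_snake (by omega) 0).comp ?_
    simpa only [mul_zero, indexSet_zero, Set.bijOn_univ] using bijective_splice hm
  · simp only [Function.comp_apply]
    rcases splice_add_one hm i with h | ⟨h, h'⟩ | ⟨h, h'⟩ | ⟨h, h'⟩ | ⟨h, h'⟩
    · rw [h]
      exact snake_adj (by omega) _
    · rw [h, h', snake_row_zero (by omega) (by omega), snake_row_one (by omega) (by omega),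
        grid_adj_iff]
      omega
    · rw [h, h', snake_row_two (by omega) (by omega), snake_row_one (by omega) (by omega),
        grid_adj_iff]
      omega
    · rw [h, h', snake_row_one (by omega) (by omega), snake_row_zero (by omega) (by omega),
        grid_adj_iff]
      omega
    · rw [h, h', snake_row_one (by omega) (by omega), snake_row_two (by omega) (by omega),
        grid_adj_iff]
      omega

theorem hasHorizontalTriple_strip {m : ℕ} (hm : 3 ≤ m) :
    HasHorizontalTriple 0 (strip m) (-1) 1 := by
  refine ⟨3 * m - 5, .inl rfl, .inl rfl, ?_, ?_⟩
  · have h₀ : splice m (3 * m - 5) = m + 1 := by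
      simp only [splice]; split_ifs <;> omega
    have h₁ : splice m (3 * m - 5 + 1) = m - 2 := by
      simp only [splice]; split_ifs <;> omega
    simp only [strip, Function.comp_apply, h₀, h₁]
    rw [snake_row_zero (by omega) (by omega), snake_row_one (by omega) (by omega)]
    simp only [Prod.swap_prod_mk, Prod.mk_add_mk, Prod.mk.injEq, Units.val_neg, Units.val_one]
    omega
  · have h₂ : splice m (3 * m - 5 + 2) = m - 1 := by
      simp only [splice]; split_ifs <;> omega
    have h₃ : splice m (3 * m - 5 + 3) = m := by
      simp only [splice]; split_ifs <;> omega
    simp only [strip, Function.comp_apply, h₂, h₃]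
    rw [snake_row_one (by omega) (by omega), snake_row_zero (by omega) (by omega)]
    simp only [Prod.swap_prod_mk, Prod.mk_add_mk, Prod.mk.injEq, Units.val_one]
    omega

theorem hasHorizontalTriple_swap_snake_two :
    HasHorizontalTriple 0 (Prod.swap ∘ snake 2) 1 1 :=
  ⟨1, .inl rfl, .inl rfl, by decide, by decide⟩

end Strip

section Spiral

theorem bijective_zpow_apply {α : Type*} [Infinite α] {σ : Equiv.Perm α} {p : α}
    (hσ : ∀ q, σ.SameCycle p q) : Function.Bijective fun i : ℤ => (σ ^ i) p := by
  have hsurj : Function.Surjective fun i : ℤ => (σ ^ i) p := hσ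
  refine ⟨fun i j (heq : (σ ^ i) p = (σ ^ j) p) => ?_, hsurj⟩
  by_contra hne
  wlog hij : i < j generalizing i j
  · exact this j i heq.symm (Ne.symm hne) (lt_of_le_of_ne (not_lt.1 hij) (Ne.symm hne))
  have hperiodic : Function.Periodic (fun i : ℤ => (σ ^ i) p) (j - i) := fun k => by
    have hfix : (σ ^ (j - i)) p = p := by
      rw [sub_eq_neg_add, zpow_add, Equiv.Perm.mul_apply, ← heq, ← Equiv.Perm.mul_apply,
        ← zpow_add, neg_add_cancel, zpow_zero, Equiv.Perm.one_apply]
    simp only [zpow_add, Equiv.Perm.mul_apply, hfix]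
  have hrange := hperiodic.image_Ioc (sub_pos.2 hij) 0
  rw [hsurj.range_eq] at hrange
  exact Set.infinite_univ (hrange ▸ (Set.finite_Ioc _ _).image _)

/-- The successor map of a path spiralling outwards through all of `ℤ × ℤ`: odd columns are
traversed downwards, even columns upwards, odd rows to the left and even rows to the right. -/
def spiralNext (p : ℤ × ℤ) : ℤ × ℤ :=
  if p.1 % 2 = 1 ∧ (-p.1 < p.2 ∧ p.2 < p.1 ∨ p.1 + 1 < p.2 ∧ p.2 ≤ -p.1) then (p.1, p.2 - 1)
  else if p.1 % 2 = 0 ∧ (-p.1 ≤ p.2 ∧ p.2 < p.1 - 1 ∨ p.1 < p.2 ∧ p.2 < -p.1) then (p.1, p.2 + 1)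
  else if p.2 % 2 = 1 then (p.1 - 1, p.2)
  else (p.1 + 1, p.2)

theorem neg_spiralNext_neg_spiralNext (p : ℤ × ℤ) : -spiralNext (-spiralNext p) = p := by
  simp only [spiralNext, Prod.ext_iff]
  split_ifs <;> simp_all only [Prod.fst_neg, Prod.snd_neg] <;> omega

theorem spiralNext_adj (p : ℤ × ℤ) : (SimpleGraph.hasse (ℤ × ℤ)).Adj p (spiralNext p) := by
  simp only [grid_adj_iff, spiralNext]
  split_ifs <;> grind

/-- `spiralNext` as a permutation; the point reflection at the origin reverses the spiral. -/
def spiralPerm : Equiv.Perm (ℤ × ℤ) where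
  toFun := spiralNext
  invFun p := -spiralNext (-p)
  left_inv := neg_spiralNext_neg_spiralNext
  right_inv p := neg_inj.1 (neg_spiralNext_neg_spiralNext (-p))

theorem sameCycle_spiral_neg {p : ℤ × ℤ} (h : spiralPerm.SameCycle 0 p) :
    spiralPerm.SameCycle 0 (-p) := by
  have hneg : Equiv.neg (ℤ × ℤ) * spiralPerm * (Equiv.neg (ℤ × ℤ))⁻¹ = spiralPerm⁻¹ := by
    ext1 p
    rfl
  have h' := h.conj (g := Equiv.neg (ℤ × ℤ))
  rw [hneg, Equiv.Perm.sameCycle_inv] at h'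
  simpa using h'

theorem sameCycle_spiral_of_eq {p q : ℤ × ℤ} (h : spiralNext p = q ∨ spiralNext q = p) :
    spiralPerm.SameCycle p q := by
  rcases h with h | h
  · exact ⟨1, h⟩
  · exact Equiv.Perm.SameCycle.symm ⟨1, h⟩

theorem sameCycle_spiral_column {k b : ℤ} (h₀ : -k ≤ b) (h₁ : b < k) :
    spiralPerm.SameCycle (k - 1, k - 1) (k, b) := by
  induction b, Int.le_sub_one_of_lt h₁ using Int.leInductionDown with
  | base =>
    apply sameCycle_spiral_of_eq
    simp only [spiralNext, Prod.ext_iff]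
    split_ifs <;> omega
  | pred b hb ih =>
    refine (ih (by omega) (by omega)).trans (sameCycle_spiral_of_eq ?_)
    simp only [spiralNext, Prod.ext_iff]
    split_ifs <;> omega

theorem sameCycle_spiral_row {k a : ℤ} (hk : 0 < k) (h₀ : -k ≤ a) (h₁ : a ≤ k) :
    spiralPerm.SameCycle (k - 1, k - 1) (a, -k) := by
  induction a, h₁ using Int.leInductionDown with
  | base => exact sameCycle_spiral_column le_rfl (by omega)
  | pred a ha ih =>
    refine (ih (by omega)).trans (sameCycle_spiral_of_eq ?_)
    simp only [spiralNext, Prod.ext_iff]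
    split_ifs <;> omega

theorem sameCycle_spiral_diagonal (k : ℕ) : spiralPerm.SameCycle 0 ((k : ℤ), (k : ℤ)) := by
  induction k with
  | zero => exact Equiv.Perm.SameCycle.rfl
  | succ k ih =>
    have h := sameCycle_spiral_row (k := k + 1) (a := -(k + 1)) (by omega) le_rfl (by omega)
    rw [add_sub_cancel_right] at h
    simpa using sameCycle_spiral_neg (ih.trans h)

theorem sameCycle_spiral (p : ℤ × ℤ) : spiralPerm.SameCycle 0 p := by
  have half {a b : ℤ} (h : b < a ∨ a = b ∧ a < 0) : spiralPerm.SameCycle 0 (a, b) := by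
    rcases lt_or_ge (-a) (b + 1) with hb | hb
    · obtain ⟨k, rfl⟩ := Int.eq_succ_of_zero_lt (by omega : 0 < a)
      refine (sameCycle_spiral_diagonal k).trans ?_
      simpa using sameCycle_spiral_column (k := k + 1) (b := b) (by omega) (by omega)
    · obtain ⟨k, hk⟩ := Int.eq_succ_of_zero_lt (by omega : 0 < -b)
      obtain rfl : b = -(k + 1) := by omega
      refine (sameCycle_spiral_diagonal k).trans ?_
      simpa using sameCycle_spiral_row (k := k + 1) (a := a) (by omega) (by omega) (by omega)
  obtain ⟨a, b⟩ := p
  rcases (by omega : (a = 0 ∧ b = 0) ∨ (b < a ∨ a = b ∧ a < 0) ∨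
    (-b < -a ∨ -a = -b ∧ -a < 0)) with ⟨rfl, rfl⟩ | h | h
  · exact Equiv.Perm.SameCycle.rfl
  · exact half h
  · simpa using sameCycle_spiral_neg (half h)

/-- The two-sided infinite path through `ℤ × ℤ` generated by `spiralNext`. -/
def spiral (i : ℤ) : ℤ × ℤ := (spiralPerm ^ i) 0

theorem spiral_add_one (i : ℤ) : spiral (i + 1) = spiralNext (spiral i) := by
  rw [spiral, add_comm, zpow_one_add]
  rfl

theorem isGridPath_spiral : IsGridPath 0 0 0 spiral where
  bijOn := by
    rw [indexSet_zero, Set.univ_prod_univ, Set.bijOn_univ]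
    exact bijective_zpow_apply sameCycle_spiral
  adj i _ _ := by
    rw [spiral_add_one]
    exact spiralNext_adj _

theorem hasHorizontalTriple_spiral : HasHorizontalTriple 0 spiral 1 1 := by
  obtain ⟨i, hi⟩ : ∃ i, spiral i = (-2, 2) := sameCycle_spiral _
  have h₁ : spiral (i + 1) = (-1, 2) := by rw [spiral_add_one, hi]; decide
  have h₂ : spiral (i + 2) = (0, 2) := by
    rw [← one_add_one_eq_two, ← add_assoc, spiral_add_one, h₁]; decide
  have h₃ : spiral (i + 3) = (1, 2) := by
    rw [← two_add_one_eq_three, ← add_assoc, spiral_add_one, h₂]; decide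
  exact ⟨i, .inl rfl, .inl rfl, by rw [hi, h₁]; decide, by rw [h₂, h₃]; decide⟩

end Spiral

theorem exists_gridPath (n m : ℕ) : ∃ l u, IsGridPath n m l u := by
  rcases Nat.eq_zero_or_pos n with rfl | hn
  · rcases Nat.eq_zero_or_pos m with rfl | hm
    · exact ⟨_, _, isGridPath_spiral⟩
    · exact ⟨_, _, (isGridPath_snake hm 0).swap⟩
  · exact ⟨_, _, isGridPath_snake hn m⟩

theorem exists_gridPath_triple {n m : ℕ} (hn : n ≠ 1) (hm : m ≠ 1) :
    ∃ l u δ ε, IsGridPath n m l u ∧ HasHorizontalTriple l u δ ε ∧ (n ≠ 0 → ε = -δ) := by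
  rcases (by omega : 2 ≤ n ∨ n = 0 ∧ (m = 0 ∨ m = 2 ∨ 3 ≤ m)) with h | ⟨rfl, rfl | rfl | h⟩
  · exact ⟨_, _, _, _, isGridPath_snake (by omega) m, hasHorizontalTriple_snake h hm,
      fun _ => rfl⟩
  · exact ⟨_, _, _, _, isGridPath_spiral, hasHorizontalTriple_spiral, fun h => absurd rfl h⟩
  · exact ⟨_, _, _, _, (isGridPath_snake two_pos 0).swap, hasHorizontalTriple_swap_snake_two,
      fun h => absurd rfl h⟩
  · exact ⟨_, _, _, _, isGridPath_strip h, hasHorizontalTriple_strip h, fun h => absurd rfl h⟩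

section Group

variable {G : Type*} [CommGroup G] {S : Set G}

theorem adj_mul_right {s : G} (hs : s ∈ S) (hs₁ : s ≠ 1) (g : G) :
    (SimpleGraph.mulCayley S).Adj g (g * s) := by
  simp [SimpleGraph.mulCayley_adj, hs, hs₁]

theorem wellFoundedGT_subgroup [Group.FG G] : WellFoundedGT (Subgroup G) := by
  have : Module.Finite ℤ (Additive G) := Module.Finite.iff_addGroup_fg.2 inferInstance
  exact (Subgroup.toAddSubgroup.trans AddSubgroup.toIntSubmodule).toOrderEmbedding.wellFoundedGT

/-- A walk of length `n` in `Cay(G; S)` whose projection to `G ⧸ N` is a hamiltonian path. -/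
structure IsPathTransversal (S : Set G) (N : Subgroup G) (n : ℕ) (w : ℤ → G) : Prop where
  bijOn : Set.BijOn (fun i => (w i : G ⧸ N)) (indexSet n) Set.univ
  adj : ∀ i ∈ indexSet n, i + 1 ∈ indexSet n → (SimpleGraph.mulCayley S).Adj (w i) (w (i + 1))

namespace IsPathTransversal

variable {N : Subgroup G} {s : G} {n l : ℕ} {w : ℤ → G} {u : ℤ → ℤ × ℤ}

theorem index_eq (hw : IsPathTransversal S N n w) : N.index = n :=
  natCard_of_bijOn_indexSet hw.bijOn

theorem isPathOnto (hw : IsPathTransversal S ⊥ n w) :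
    IsPathOnto (SimpleGraph.mulCayley S) Set.univ n w where
  bijOn := QuotientGroup.quotientBot.bijective.bijOn_univ.comp hw.bijOn
  adj := hw.adj

theorem bijOn_zpow_mul (hw : IsPathTransversal S (N ⊔ Subgroup.zpowers s) n w) :
    Set.BijOn (fun p : ℤ × ℤ => ((s ^ p.1 * w p.2 : G) : G ⧸ N))
      (indexSet (orderOf (s : G ⧸ N)) ×ˢ indexSet n) Set.univ := by
  have hs := bijOn_zpow (s : G ⧸ N)
  refine ⟨Set.mapsTo_univ _ _, ?_, ?_⟩
  · rintro ⟨a, b⟩ ⟨ha, hb⟩ ⟨a', b'⟩ ⟨ha', hb'⟩ heq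
    dsimp only at heq
    obtain rfl : b = b' := by
      have hproj (c d : ℤ) : ((s ^ c * w d : G) : G ⧸ N ⊔ Subgroup.zpowers s) = w d := by
        rw [mul_comm, QuotientGroup.mk_mul_of_mem _
          (Subgroup.mem_sup_right (Subgroup.zpow_mem_zpowers s c))]
      refine hw.bijOn.injOn hb hb' ?_
      rw [← hproj a, ← hproj a']
      exact QuotientGroup.eq.2 (Subgroup.mem_sup_left (QuotientGroup.eq.1 heq))
    rw [QuotientGroup.mk_mul, QuotientGroup.mk_mul, mul_left_inj] at heq
    exact Prod.ext (hs.injOn ha ha' heq) rfl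
  · rintro g -
    obtain ⟨g, rfl⟩ := QuotientGroup.mk_surjective g
    obtain ⟨b, hb, hbg⟩ := hw.bijOn.surjOn (Set.mem_univ (g : G ⧸ N ⊔ Subgroup.zpowers s))
    obtain ⟨y, hy, _, ⟨c, rfl⟩, hyc⟩ := Subgroup.mem_sup.1 (QuotientGroup.eq.1 hbg)
    obtain ⟨a, ha, hac⟩ := hs.surjOn (Subgroup.zpow_mem_zpowers (s : G ⧸ N) c)
    refine ⟨(a, b), ⟨ha, hb⟩, ?_⟩
    have hg : g = s ^ c * w b * y := by
      rw [eq_mul_of_inv_mul_eq hyc.symm]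
      ac_rfl
    dsimp only at hac ⊢
    rw [hg, QuotientGroup.mk_mul_of_mem _ hy, QuotientGroup.mk_mul, QuotientGroup.mk_zpow, hac,
      QuotientGroup.mk_mul, QuotientGroup.mk_zpow]

theorem comp_gridPath (hw : IsPathTransversal S (N ⊔ Subgroup.zpowers s) n w) (hs : s ∈ S)
    (hs₁ : s ≠ 1) (hu : IsGridPath (orderOf (s : G ⧸ N)) n l u) :
    IsPathTransversal S N l fun i => s ^ (u i).1 * w (u i).2 where
  bijOn := hw.bijOn_zpow_mul.comp hu.bijOn
  adj i hi hi' := by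
    have hrow (a b : ℤ) : (SimpleGraph.mulCayley S).Adj (s ^ a * w b) (s ^ (a + 1) * w b) := by
      rw [zpow_add_one, mul_right_comm]
      exact adj_mul_right hs hs₁ _
    obtain ⟨-, hb⟩ := hu.bijOn.mapsTo hi
    obtain ⟨-, hb'⟩ := hu.bijOn.mapsTo hi'
    rcases grid_adj_iff.1 (hu.adj i hi hi') with ⟨h | h, h₂⟩ | ⟨h₁, h | h⟩
    · rw [h, h₂]
      exact hrow _ _
    · rw [h, h₂]
      exact (hrow _ _).symm
    · rw [h] at hb' ⊢
      rw [h₁, SimpleGraph.mulCayley_adj_mul_iff_right]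
      exact hw.adj _ hb hb'
    · rw [h] at hb ⊢
      rw [h₁, SimpleGraph.mulCayley_adj_mul_iff_right]
      exact (hw.adj _ hb' hb).symm

end IsPathTransversal

theorem exists_isPathTransversal [Group.FG G] (hgen : Subgroup.closure S = ⊤) (N : Subgroup G) :
    ∃ n w, IsPathTransversal S N n w := by
  have := wellFoundedGT_subgroup (G := G)
  induction N using WellFoundedGT.induction with
  | _ N ih =>
  by_cases hN : S ⊆ N
  · obtain rfl : N = ⊤ := top_unique (hgen ▸ (Subgroup.closure_le N).2 hN)
    refine ⟨1, fun _ => 1, ?_, ?_⟩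
    · rw [indexSet_one]
      refine ⟨Set.mapsTo_univ _ _, Set.injOn_singleton _ _, fun g _ => ⟨0, rfl, ?_⟩⟩
      exact QuotientGroup.subsingleton_quotient_top.elim _ _
    · simp [indexSet_one]
  · obtain ⟨s, hs, hsN⟩ := Set.not_subset.1 hN
    have hlt : N < N ⊔ Subgroup.zpowers s := by
      rwa [left_lt_sup, Subgroup.zpowers_le]
    obtain ⟨m, w, hw⟩ := ih _ hlt
    obtain ⟨l, u, hu⟩ := exists_gridPath (orderOf (s : G ⧸ N)) m
    have hs₁ : s ≠ 1 := fun h => hsN (h ▸ N.one_mem)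
    exact ⟨l, _, hw.comp_gridPath hs hs₁ hu⟩

/-- Along `v` the step `a` is followed, two positions later, by the step `b`. -/
def HasTriple (n : ℕ) (v : ℤ → G) (a b : G) : Prop :=
  ∃ i ∈ indexSet n, i + 3 ∈ indexSet n ∧
    (v i)⁻¹ * v (i + 1) = a ∧ (v (i + 2))⁻¹ * v (i + 3) = b

/-- `Cay(G; S)` has a hamiltonian path in which two steps `x` or `x⁻¹` are one step apart, and these
two steps are mutually inverse if `x` has finite order. -/
def HasUsefulTriplePath (S : Set G) (x : G) : Prop :=
  ∃ (n : ℕ) (v : ℤ → G) (δ ε : ℤˣ), IsPathOnto (SimpleGraph.mulCayley S) Set.univ n v ∧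
    HasTriple n v (x ^ (δ : ℤ)) (x ^ (ε : ℤ)) ∧ (orderOf x ≠ 0 → ε = -δ)

theorem HasHorizontalTriple.hasTriple {l : ℕ} {u : ℤ → ℤ × ℤ} {δ ε : ℤˣ}
    (hu : HasHorizontalTriple l u δ ε) (x : G) (w : ℤ → G) :
    HasTriple l (fun i => x ^ (u i).1 * w (u i).2) (x ^ (δ : ℤ)) (x ^ (ε : ℤ)) := by
  have hstep (p : ℤ × ℤ) (d : ℤ) :
      (x ^ p.1 * w p.2)⁻¹ * (x ^ (p + (d, 0)).1 * w (p + (d, 0)).2) = x ^ d := by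
    rw [Prod.fst_add, Prod.snd_add, add_zero, zpow_add, mul_right_comm, inv_mul_cancel_left]
  obtain ⟨i, hi, hi', h, h'⟩ := hu
  exact ⟨i, hi, hi', by simpa only [h] using hstep _ _, by simpa only [h'] using hstep _ _⟩

/-- Reverses the last `k` of the positions `0, …, n - 1`. -/
def reverseTail (n : ℕ) (k i : ℤ) : ℤ := if i < n - k then i else 2 * n - k - 1 - i

theorem bijOn_reverseTail {n : ℕ} {k : ℕ} (hn : n ≠ 0) (hk : k ≤ n) :
    Set.BijOn (reverseTail n k) (indexSet n) (indexSet n) := by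
  have hinv (i : ℤ) (hi : i ∈ indexSet n) : reverseTail n k (reverseTail n k i) = i := by
    simp only [mem_indexSet, reverseTail] at hi ⊢
    split_ifs <;> omega
  have hmaps : Set.MapsTo (reverseTail n k) (indexSet n) (indexSet n) := fun i hi => by
    simp only [mem_indexSet, reverseTail] at hi ⊢
    split_ifs <;> omega
  exact Set.InvOn.bijOn ⟨hinv, hinv⟩ hmaps hmaps

theorem adj_zpow_reverseTail {x : G} {k : ℕ} (h1 : (1 : G) ∉ S) (hx : x ∈ S)
    (hy : x ^ k ∈ S) (i : ℤ) :
    (SimpleGraph.mulCayley S).Adj (x ^ reverseTail (orderOf x) k i)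
      (x ^ reverseTail (orderOf x) k (i + 1)) := by
  have hstep {z : G} (hz : z ∈ S) (g : G) := adj_mul_right hz (ne_of_mem_of_not_mem hz h1) g
  set n := orderOf x
  rcases lt_trichotomy i (n - k - 1) with h | rfl | h
  · rw [reverseTail, reverseTail, if_pos (by omega), if_pos (by omega), zpow_add_one]
    exact hstep hx _
  · rw [reverseTail, reverseTail, if_pos (by omega), if_neg (by omega),
      show (2 * n - k - 1 - (n - k - 1 + 1) : ℤ) = n - k - 1 + k by ring, zpow_add _ _ (k : ℤ),
      zpow_natCast]
    exact hstep hy _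
  · rw [reverseTail, reverseTail, if_neg (by omega), if_neg (by omega),
      show (2 * n - k - 1 - i : ℤ) = 2 * n - k - 1 - (i + 1) + 1 by ring, zpow_add_one]
    exact (hstep hx _).symm

theorem exists_path_triple_of_isOfFinOrder {x y : G} (h1 : (1 : G) ∉ S) (hx : x ∈ S)
    (hy : y ∈ S) (hyx : y ≠ x) (hyx' : y ≠ x⁻¹) (htop : Subgroup.zpowers x = ⊤)
    (hfin : IsOfFinOrder x) :
    ∃ v, IsPathOnto (SimpleGraph.mulCayley S) Set.univ (orderOf x) v ∧
      HasTriple (orderOf x) v x x⁻¹ := by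
  have hpos := hfin.orderOf_pos
  obtain ⟨k, hk, rfl⟩ : ∃ k < orderOf x, x ^ k = y := by
    have hy_mem : y ∈ Subgroup.zpowers x := htop ▸ Subgroup.mem_top y
    classical
    simpa [hfin.mem_zpowers_iff_mem_range_orderOf] using hy_mem
  have hk₂ : 2 ≤ k := by
    by_contra! h
    interval_cases k
    · exact h1 (pow_zero x ▸ hy)
    · exact hyx (pow_one x)
  have hk₃ : k + 2 ≤ orderOf x := by
    by_contra! h
    refine hyx' (eq_inv_of_mul_eq_one_left ?_)
    rw [← pow_succ, show k + 1 = orderOf x by omega, pow_orderOf_eq_one]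
  refine ⟨fun i => x ^ reverseTail (orderOf x) k i, ⟨?_, fun i _ _ => ?_⟩, ?_⟩
  · have h := bijOn_zpow x
    rw [htop, Subgroup.coe_top] at h
    exact h.comp (bijOn_reverseTail hpos.ne' hk.le)
  · exact adj_zpow_reverseTail h1 hx hy i
  · refine ⟨orderOf x - k - 2, .inr ⟨by omega, by omega⟩, .inr ⟨by omega, by omega⟩, ?_, ?_⟩
    · dsimp only
      rw [reverseTail, reverseTail, if_pos (by omega), if_pos (by omega), zpow_add_one,
        inv_mul_cancel_left]
    · dsimp only
      rw [reverseTail, reverseTail, if_neg (by omega), if_neg (by omega), inv_mul_eq_iff_eq_mul,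
        ← zpow_sub_one]
      ring_nf

theorem exists_path_triple_of_zpowers_eq_top {x y : G} (h1 : (1 : G) ∉ S) (hx : x ∈ S)
    (hy : y ∈ S) (hyx : y ≠ x) (hyx' : y ≠ x⁻¹) (htop : Subgroup.zpowers x = ⊤) :
    HasUsefulTriplePath S x := by
  by_cases hfin : IsOfFinOrder x
  · obtain ⟨v, hv, htriple⟩ := exists_path_triple_of_isOfFinOrder h1 hx hy hyx hyx' htop hfin
    exact ⟨_, v, 1, -1, hv, by simpa using htriple, fun _ => rfl⟩
  · have h₀ : orderOf x = 0 := orderOf_eq_zero hfin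
    refine ⟨0, (x ^ · : ℤ → G), 1, 1, ⟨?_, fun i _ _ => ?_⟩, ?_, fun h => absurd h₀ h⟩
    · simpa only [h₀, htop, Subgroup.coe_top] using bijOn_zpow x
    · rw [zpow_add_one]
      exact adj_mul_right hx (ne_of_mem_of_not_mem hx h1) _
    · refine ⟨0, .inl rfl, .inl rfl, ?_, ?_⟩ <;> rw [← zpow_neg, ← zpow_add] <;> rfl

theorem exists_path_triple_of_zpowers_ne_top [Group.FG G] {x : G} (hx : x ∈ S) (hx₁ : x ≠ 1)
    (hgen : Subgroup.closure S = ⊤) (htop : Subgroup.zpowers x ≠ ⊤) :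
    HasUsefulTriplePath S x := by
  obtain ⟨m, w, hw⟩ := exists_isPathTransversal hgen (⊥ ⊔ Subgroup.zpowers x)
  have hm : m ≠ 1 := by
    rwa [← hw.index_eq, bot_sup_eq, ne_eq, Subgroup.index_eq_one]
  have horder : orderOf (x : G ⧸ (⊥ : Subgroup G)) = orderOf x :=
    orderOf_injective (QuotientGroup.mk' ⊥) QuotientGroup.quotientBot.symm.injective x
  have hn : orderOf x ≠ 1 := orderOf_eq_one_iff.not.2 hx₁
  obtain ⟨l, u, δ, ε, hu, htriple, hstrong⟩ := exists_gridPath_triple hn hm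
  exact ⟨l, _, δ, ε, (hw.comp_gridPath hx hx₁ (horder ▸ hu)).isPathOnto, htriple.hasTriple x w,
    hstrong⟩

theorem exists_path_triple [Group.FG G] {x y : G} (h1 : (1 : G) ∉ S)
    (hgen : Subgroup.closure S = ⊤) (hx : x ∈ S) (hy : y ∈ S) (hyx : y ≠ x) (hyx' : y ≠ x⁻¹) :
    HasUsefulTriplePath S x := by
  by_cases htop : Subgroup.zpowers x = ⊤
  · exact exists_path_triple_of_zpowers_eq_top h1 hx hy hyx hyx' htop
  · exact exists_path_triple_of_zpowers_ne_top hx (ne_of_mem_of_not_mem hx h1) hgen htop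

theorem indexSet_eq_Icc_or_univ {α : Type*} {n : ℕ} {v : ℤ → α}
    (hv : Set.BijOn v (indexSet n) Set.univ) :
    (Finite α ∧ indexSet n = Set.Icc 0 ((Nat.card α : ℤ) - 1)) ∨
      (Infinite α ∧ indexSet n = Set.univ) := by
  rcases Nat.eq_zero_or_pos n with rfl | hn
  · rw [indexSet_zero, Set.bijOn_univ] at hv
    exact .inr ⟨Infinite.of_injective v hv.injective, indexSet_zero⟩
  · have hcard := natCard_of_bijOn_indexSet hv
    exact .inl ⟨Nat.finite_of_card_ne_zero (hcard ▸ hn.ne'), by rw [hcard, indexSet_of_pos hn]⟩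

theorem inv_mul_mem_of_adj (hS : S⁻¹ = S) {g h : G} (hadj : (SimpleGraph.mulCayley S).Adj g h) :
    g⁻¹ * h ∈ S := by
  rcases ((SimpleGraph.mulCayley_adj S g h).1 hadj).2 with h' | h'
  · exact h'
  · rwa [← hS, Set.mem_inv, mul_inv_rev, inv_inv]

theorem zpow_units_mem_pair (x : G) (δ : ℤˣ) : x ^ (δ : ℤ) ∈ ({x, x⁻¹} : Set G) := by
  rcases Int.units_eq_one_or δ with rfl | rfl <;> simp

theorem pair_zpow_units (x : G) (δ : ℤˣ) :
    ({x ^ (δ : ℤ), x ^ ((-δ : ℤˣ) : ℤ)} : Set G) = {x, x⁻¹} := by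
  rcases Int.units_eq_one_or δ with rfl | rfl <;> simp [Set.pair_comm]

end Group

end UsefulTriple

open UsefulTriple in
theorem abelian_hamiltonian_path_useful_triple_general
    {G : Type*} [CommGroup G] [Group.FG G] (S : Set G)
    (h1 : (1 : G) ∉ S) (hS : S⁻¹ = S) (hgen : Subgroup.closure S = ⊤)
    (x : G) (hx : x ∈ S) (y : G) (hy : y ∈ S) (hyx : y ∉ ({x, x⁻¹} : Set G)) :
    ∃ (I : Set ℤ) (v : ℤ → G),
      ((Finite G ∧ I = Set.Icc 0 ((Nat.card G : ℤ) - 1)) ∨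
        (Infinite G ∧ I = Set.univ)) ∧
      Set.BijOn v I Set.univ ∧
      (∀ i : ℤ, i ∈ I → i + 1 ∈ I → (v i)⁻¹ * v (i + 1) ∈ S) ∧
      ∃ i : ℤ, (i ∈ I ∧ i + 1 ∈ I ∧ i + 2 ∈ I ∧ i + 3 ∈ I) ∧
        ((v i)⁻¹ * v (i + 1) ∈ ({x, x⁻¹} : Set G) ∧
          (v (i + 2))⁻¹ * v (i + 3) ∈ ({x, x⁻¹} : Set G)) ∧
        ((Subgroup.zpowers x : Set G).Finite →
          ({(v i)⁻¹ * v (i + 1), (v (i + 2))⁻¹ * v (i + 3)} : Set G) = ({x, x⁻¹} : Set G)) := by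
  simp only [Set.mem_insert_iff, Set.mem_singleton_iff, not_or] at hyx
  obtain ⟨n, v, δ, ε, hv, ⟨i, hi, hi', hδ, hε⟩, hstrong⟩ :=
    exists_path_triple h1 hgen hx hy hyx.1 hyx.2
  refine ⟨indexSet n, v, indexSet_eq_Icc_or_univ hv.bijOn, hv.bijOn,
    fun j hj hj' => inv_mul_mem_of_adj hS (hv.adj j hj hj'), i, ?_, ?_, fun hfin => ?_⟩
  · simp only [mem_indexSet] at hi hi' ⊢
    omega
  · rw [hδ, hε]
    exact ⟨zpow_units_mem_pair x δ, zpow_units_mem_pair x ε⟩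
  · rw [hδ, hε, hstrong (orderOf_ne_zero_iff.2 (finite_zpowers.1 hfin)),
      pair_zpow_units]

/-- Let `G` be an abelian group generated by a finite symmetric set `S`
with `1 ∉ S`, let `x ∈ S` and suppose some `y ∈ S` satisfies `y ∉ {x, x⁻¹}`. Then
`Cay(G;S)` has a hamiltonian path containing a useful `x`-triple, and if `⟨x⟩` is
finite the path can be chosen to contain a strongly useful `x`-triple. -/
theorem abelian_hamiltonian_path_useful_triple
    {G : Type*} [CommGroup G] (S : Set G) (hSfin : S.Finite)
    (h1 : (1 : G) ∉ S) (hS : S⁻¹ = S) (hgen : Subgroup.closure S = ⊤)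
    (x : G) (hx : x ∈ S) (y : G) (hy : y ∈ S) (hyx : y ∉ ({x, x⁻¹} : Set G)) :
    (∃ (I : Set ℤ) (v : ℤ → G),
      ((Finite G ∧ I = Set.Icc 0 ((Nat.card G : ℤ) - 1)) ∨
        (Infinite G ∧ I = Set.univ)) ∧
      Set.BijOn v I Set.univ ∧
      (∀ i : ℤ, i ∈ I → i + 1 ∈ I → (v i)⁻¹ * v (i + 1) ∈ S) ∧
      -- a useful `x`-triple
      (∃ i : ℤ, i ∈ I ∧ i + 1 ∈ I ∧ i + 2 ∈ I ∧ i + 3 ∈ I ∧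
        (v i)⁻¹ * v (i + 1) ∈ ({x, x⁻¹} : Set G) ∧
        (v (i + 2))⁻¹ * v (i + 3) ∈ ({x, x⁻¹} : Set G))) ∧
    ((Subgroup.zpowers x : Set G).Finite →
      ∃ (I : Set ℤ) (v : ℤ → G),
        ((Finite G ∧ I = Set.Icc 0 ((Nat.card G : ℤ) - 1)) ∨
          (Infinite G ∧ I = Set.univ)) ∧
        Set.BijOn v I Set.univ ∧
        (∀ i : ℤ, i ∈ I → i + 1 ∈ I → (v i)⁻¹ * v (i + 1) ∈ S) ∧
        -- a strongly useful `x`-triple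
        (∃ i : ℤ, i ∈ I ∧ i + 1 ∈ I ∧ i + 2 ∈ I ∧ i + 3 ∈ I ∧
          ({(v i)⁻¹ * v (i + 1), (v (i + 2))⁻¹ * v (i + 3)} : Set G)
            = ({x, x⁻¹} : Set G))) := by
  have : Group.FG G := Group.fg_iff.2 ⟨S, hgen, hSfin⟩
  obtain ⟨I, v, hI, hbij, hstep, i, ⟨h₀, h₁, h₂, h₃⟩, ⟨huseful, huseful'⟩, hstrong⟩ :=
    abelian_hamiltonian_path_useful_triple_general S h1 hS hgen x hx y hy hyx
  exact ⟨⟨I, v, hI, hbij, hstep, i, h₀, h₁, h₂, h₃, huseful, huseful'⟩,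
    fun hfin => ⟨I, v, hI, hbij, hstep, i, h₀, h₁, h₂, h₃, hstrong hfin⟩⟩
end

section
/- Let X be a connected simple graph with at least one edge, and let G be a group of automorphisms of X acting faithfully and transitively on V(X) but not sharply transitively (i.e., the stabilizer of some vertex is non-trivial). Then for every vertex v of X there exists a neighbor u of v such that St_G(u) ≠ St_G(v). -/
/-!
If all neighbours of one vertex share its stabilizer, then by transitivity and conjugation the
stabilizers agree along every edge, hence everywhere by connectedness. But an element of a common
stabilizer fixes every vertex, so in a faithful action it is trivial.
-/

lemma eqvGen_adj_of_reachable {V : Type*} {X : SimpleGraph V} {u w : V} (h : X.Reachable u w) :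
    Relation.EqvGen X.Adj u w := by
  obtain ⟨p⟩ := h
  induction p with
  | nil => exact .refl _
  | cons hadj _ ih => exact .trans _ _ _ (.rel _ _ hadj) ih

section

open MulAction

variable {G α : Type*} [Group G] [MulAction G α]

lemma stabilizer_smul_eq_stabilizer_smul_iff (g : G) {a b : α} :
    stabilizer G (g • a) = stabilizer G (g • b) ↔ stabilizer G a = stabilizer G b := by
  simp only [stabilizer_smul_eq_stabilizer_map_conj]
  exact (Subgroup.map_injective (MulAut.conj g).injective).eq_iff

lemma stabilizer_eq_of_rel_of_forall_rel [IsPretransitive G α] {r : α → α → Prop}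
    (hr : ∀ (g : G) (a b : α), r a b → r (g • a) (g • b)) {v : α}
    (hv : ∀ u, r v u → stabilizer G u = stabilizer G v) {a b : α} (hab : r a b) :
    stabilizer G a = stabilizer G b := by
  obtain ⟨g, rfl⟩ := exists_smul_eq G a v
  exact (stabilizer_smul_eq_stabilizer_smul_iff g).1 (hv _ (hr g a b hab)).symm

lemma exists_stabilizer_ne_stabilizer_of_exists_ne_bot [FaithfulSMul G α]
    (h : ∃ a : α, stabilizer G a ≠ ⊥) : ∃ a b : α, stabilizer G a ≠ stabilizer G b := by
  obtain ⟨a, ha⟩ := h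
  by_contra! heq
  refine ha ((Subgroup.eq_bot_iff_forall _).2 fun g hg ↦ faithfulSMul_iff.1 ‹_› g fun b ↦ ?_)
  rwa [heq a b, mem_stabilizer_iff] at hg

theorem exists_neighbor_with_different_stabilizer_general [IsPretransitive G α]
    {r : α → α → Prop} (hconn : ∀ a b : α, Relation.EqvGen r a b)
    (hr : ∀ (g : G) (a b : α), r a b → r (g • a) (g • b))
    (hne : ∃ a b : α, stabilizer G a ≠ stabilizer G b) (v : α) :
    ∃ u : α, r v u ∧ stabilizer G u ≠ stabilizer G v := by
  by_contra! hv
  obtain ⟨a, b, hab⟩ := hne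
  have hrel (a b : α) (h : r a b) : stabilizer G a = stabilizer G b :=
    stabilizer_eq_of_rel_of_forall_rel hr hv h
  exact hab (congrArg (Quot.lift (stabilizer G) hrel) (Quot.eqvGen_sound (hconn a b)))

end

/-- if a group `G` acts faithfully and transitively, but not sharply
transitively, on a connected simple graph `X` with at least one edge, then every
vertex has a neighbour with a different stabilizer. -/
theorem exists_neighbor_with_different_stabilizer
    {V : Type*} (X : SimpleGraph V) (hconn : X.Connected)
    (hedge : ∃ u w : V, X.Adj u w)
    (G : Type*) [Group G] [MulAction G V]
    (hauto : ∀ (g : G) (u w : V), X.Adj u w → X.Adj (g • u) (g • w))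
    (hfaithful : ∀ g : G, (∀ x : V, g • x = x) → g = 1)
    (htrans : ∀ u w : V, ∃ g : G, g • u = w)
    (hnotsharp : ∃ w : V, MulAction.stabilizer G w ≠ ⊥) :
    ∀ v : V, ∃ u : V, X.Adj v u ∧
      MulAction.stabilizer G u ≠ MulAction.stabilizer G v := by
  have : MulAction.IsPretransitive G V := ⟨htrans⟩
  have : FaithfulSMul G V := faithfulSMul_iff.2 hfaithful
  exact exists_neighbor_with_different_stabilizer_general
    (fun a b ↦ eqvGen_adj_of_reachable (hconn a b)) hauto
    (exists_stabilizer_ne_stabilizer_of_exists_ne_bot hnotsharp)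
end

section
/- Let X be a connected, infinite, locally finite simple graph and let G be a group acting faithfully and transitively on X by automorphisms, whose commutator subgroup G' is cyclic of prime order p, generated by an element g. Let v : ℤ → V(X) be a map such that v(i) is adjacent to v(i+1) for all i ∈ ℤ and the G'-orbits G'·v(i), i ∈ ℤ, are pairwise distinct. Suppose k ≥ 1 and v(0) is adjacent in X to g·v(k). Then the induced subgraph of X on the vertex set ⋃_{i=0}^{k} G'·v(i) has a hamiltonian cycle, which moreover can be chosen to contain the edge from v(0) to g·v(k). -/
/-!
A cyclic normal subgroup of a group acting faithfully and transitively acts freely: each of its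
subgroups is normal in the whole group, so an element of it fixing one vertex fixes all of them.

Given a free action of a finite cyclic group with generator `c`, traverse the path backwards, from
`v k` to `v 0`, jump along the given edge to `c • v k`, traverse the translate of the path by `c`
backwards, jump to `c ^ 2 • v k`, and so on. After `orderOf c` rounds this returns to `v k`;
freeness together with the distinctness of the orbits ensures that each vertex of the block has been
visited exactly once.
-/

open MulAction SimpleGraph

section HamiltonianCycle

lemma mk_add_one_mem_edges_cycle {n : ℕ} (i : Fin (n + 3)) :
    s(i, i + 1) ∈ (cycleGraph.cycle n).edges := by
  have hi : (i : ℕ) < n + 3 := i.isLt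
  rw [Sym2.eq_swap, Walk.mk_mem_edges_iff_exists]
  refine ⟨n + 2 - i, by rw [cycleGraph.length_cycle]; omega, ?_⟩
  rw [cycleGraph.getVert_cycle (by omega), cycleGraph.getVert_cycle (by omega)]
  congr 2
  · rw [show n + 3 - (n + 2 - i) = (i : ℕ) + 1 by omega]
    exact (Fin.val_add i 1).symm
  · rw [show n + 3 - (n + 2 - i + 1) = (i : ℕ) by omega, Nat.mod_eq_of_lt hi]

lemma isHamiltonianCycle_cycle (n : ℕ) : (cycleGraph.cycle n).IsHamiltonianCycle :=
  Walk.isHamiltonianCycle_iff_isCycle_and_length_eq.2 ⟨cycleGraph.isCycle_cycle, by simp⟩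

variable {W : Type*} [DecidableEq W] {H : SimpleGraph W}

lemma exists_isHamiltonianCycle_of_bijective {n : ℕ} {f : Fin (n + 3) → W}
    (hf : f.Bijective) (hadj : ∀ i, H.Adj (f i) (f (i + 1))) :
    ∃ c : H.Walk (f 0) (f 0), c.IsHamiltonianCycle ∧ ∀ i, s(f i, f (i + 1)) ∈ c.edges := by
  let φ : cycleGraph (n + 3) →g H :=
    { toFun := f
      map_rel' := by
        rintro i j (h | h)
        · rw [sub_eq_iff_eq_add.1 h, add_comm]
          exact (hadj j).symm
        · rw [sub_eq_iff_eq_add.1 h, add_comm]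
          exact hadj i }
  refine ⟨(cycleGraph.cycle n).map φ, (isHamiltonianCycle_cycle n).map hf, fun i => ?_⟩
  rw [Walk.edges_map]
  exact List.mem_map.2 ⟨_, mk_add_one_mem_edges_cycle i, rfl⟩

lemma exists_isHamiltonianCycle_of_periodic {n : ℕ} (hn : 3 ≤ n) {f : ℕ → W}
    (hper : f.Periodic n) (hinj : Set.InjOn f (Set.Iio n)) (hsurj : f.Surjective)
    (hadj : ∀ i, H.Adj (f i) (f (i + 1))) :
    ∃ (a : W) (c : H.Walk a a), c.IsHamiltonianCycle ∧ ∀ i, s(f i, f (i + 1)) ∈ c.edges := by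
  obtain ⟨n, rfl⟩ := Nat.exists_eq_add_of_le' hn
  have hmod : ∀ i, f (i % (n + 3)) = f i := hper.map_mod_nat
  have hsucc (i : Fin (n + 3)) : f ((i + 1 : Fin (n + 3)) : ℕ) = f (i + 1) := by
    rw [Fin.val_add, Fin.val_one, hmod]
  have hbij : Function.Bijective fun i : Fin (n + 3) => f i :=
    ⟨fun i j h => Fin.ext (hinj i.isLt j.isLt h), fun w =>
      (hsurj w).imp' (Fin.ofNat (n + 3)) fun i hi => (hmod i).trans hi⟩
  obtain ⟨c, hc, hedges⟩ :=
    exists_isHamiltonianCycle_of_bijective hbij fun i => (hsucc i).symm ▸ hadj i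
  refine ⟨_, c, hc, fun i => ?_⟩
  have hedge := hedges (Fin.ofNat (n + 3) i)
  rwa [hsucc, Fin.val_ofNat, hmod, ← hmod (i % (n + 3) + 1), Nat.mod_add_mod, hmod] at hedge

end HamiltonianCycle

lemma isCancelSMul_of_normal_of_isCyclic {G V : Type*} [Group G] [MulAction G V]
    [FaithfulSMul G V] [IsPretransitive G V] (N : Subgroup G) [N.Normal] [IsCyclic N] :
    IsCancelSMul N V := by
  rw [isCancelSMul_iff_eq_one_of_smul_eq]
  intro a u hu
  refine Subtype.ext (FaithfulSMul.eq_of_smul_eq_smul fun x : V => ?_)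
  obtain ⟨b, rfl⟩ := exists_smul_eq G u x
  obtain ⟨m, hm⟩ := (MulAut.conjNormal (H := N) b⁻¹).toMonoidHom.map_cyclic
  have hconj : b⁻¹ * a * b = ((a ^ m : N) : G) := by
    rw [← hm a]
    simp
  have hfix : (b⁻¹ * a * b) • u = u := by
    rw [hconj]
    exact mem_stabilizer_iff.1 (zpow_mem (mem_stabilizer_iff.2 hu) m)
  rw [OneMemClass.coe_one, one_smul, ← inv_smul_eq_iff, smul_smul, smul_smul]
  exact hfix

lemma forall_mem_zpowers_of_zpowers_eq {G : Type*} [Group G] {N : Subgroup G} {g : G}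
    (hg : Subgroup.zpowers g = N) (a : N) :
    a ∈ Subgroup.zpowers (⟨g, hg ▸ Subgroup.mem_zpowers g⟩ : N) := by
  subst hg
  obtain ⟨n, hn⟩ := Subgroup.mem_zpowers_iff.1 a.2
  exact ⟨n, Subtype.ext hn⟩

section Spiral

variable {C V : Type*} [Group C] [MulAction C V]

variable (C) in
/-- The block spanned by `v 0, …, v k`: the union of the orbits of these points, on which the
hamiltonian cycle lives. -/
def orbitBlock (v : ℕ → V) (k : ℕ) : Set V :=
  {w | ∃ i ≤ k, w ∈ orbit C (v i)}

/-- The sequence `v k, …, v 0, c • v k, …, c • v 0, c ^ 2 • v k, …`, whose first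
`orderOf c * (k + 1)` terms trace the hamiltonian cycle. Each translate of `v 0, …, v k` is run
through backwards so that the jump from `v 0` to `c • v k` joins consecutive terms. -/
def spiral (c : C) (v : ℕ → V) (k n : ℕ) : V :=
  c ^ (n / (k + 1)) • v (k - n % (k + 1))

variable {c : C} {v : ℕ → V} {k : ℕ}

lemma spiral_mul_add (q : ℕ) {r : ℕ} (hr : r ≤ k) :
    spiral c v k ((k + 1) * q + r) = c ^ q • v (k - r) := by
  rw [spiral, Nat.mul_add_div k.succ_pos, Nat.mul_add_mod, Nat.div_eq_of_lt (by omega),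
    Nat.mod_eq_of_lt (by omega), add_zero]

lemma spiral_self : spiral c v k k = v 0 := by
  simpa using spiral_mul_add (c := c) (v := v) 0 le_rfl

lemma spiral_succ_self : spiral c v k (k + 1) = c • v k := by
  simpa using spiral_mul_add (c := c) (v := v) 1 k.zero_le

lemma spiral_periodic : Function.Periodic (spiral c v k) (orderOf c * (k + 1)) := by
  intro n
  rw [spiral, spiral, Nat.add_mul_mod_self_right, Nat.add_mul_div_right _ _ k.succ_pos, pow_add,
    pow_orderOf_eq_one, mul_one]

lemma spiral_mem_orbitBlock (n : ℕ) : spiral c v k n ∈ orbitBlock C v k :=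
  ⟨_, Nat.sub_le _ _, mem_orbit _ _⟩

lemma exists_spiral_eq [Finite C] (hc : ∀ a : C, a ∈ Subgroup.zpowers c) {w : V}
    (hw : w ∈ orbitBlock C v k) : ∃ n, spiral c v k n = w := by
  obtain ⟨i, hi, a, rfl⟩ := hw
  obtain ⟨q, rfl⟩ := mem_powers_iff_mem_zpowers.2 (hc a)
  refine ⟨(k + 1) * q + (k - i), ?_⟩
  rw [spiral_mul_add q (Nat.sub_le k i), Nat.sub_sub_self hi]

lemma spiral_injOn [IsCancelSMul C V]
    (horb : Set.InjOn (fun i => orbit C (v i)) (Set.Iic k)) :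
    Set.InjOn (spiral c v k) (Set.Iio (orderOf c * (k + 1))) := by
  intro m hm n hn h
  have horbit : orbit C (v (k - m % (k + 1))) = orbit C (v (k - n % (k + 1))) := by
    rw [← orbit_smul (c ^ (m / (k + 1))), ← orbit_smul (c ^ (n / (k + 1))) (v (k - n % (k + 1)))]
    exact congrArg (orbit C) h
  have hsub : k - m % (k + 1) = k - n % (k + 1) := horb (Nat.sub_le _ _) (Nat.sub_le _ _) horbit
  have hmod : m % (k + 1) = n % (k + 1) := by
    have hm' : m % (k + 1) < k + 1 := Nat.mod_lt m k.succ_pos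
    have hn' : n % (k + 1) < k + 1 := Nat.mod_lt n k.succ_pos
    omega
  have hpow : c ^ (m / (k + 1)) = c ^ (n / (k + 1)) := by
    rw [spiral, spiral, hmod] at h
    exact IsCancelSMul.right_cancel _ _ _ h
  have hdiv : m / (k + 1) = n / (k + 1) :=
    pow_injOn_Iio_orderOf (Nat.div_lt_of_lt_mul (by rwa [mul_comm]))
      (Nat.div_lt_of_lt_mul (by rwa [mul_comm])) hpow
  rw [← Nat.div_add_mod m (k + 1), hdiv, hmod, Nat.div_add_mod]

lemma spiral_adj {X : SimpleGraph V}
    (hauto : ∀ (a : C) (u w : V), X.Adj u w → X.Adj (a • u) (a • w))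
    (hadj : ∀ i < k, X.Adj (v i) (v (i + 1))) (hjump : X.Adj (v 0) (c • v k)) (n : ℕ) :
    X.Adj (spiral c v k n) (spiral c v k (n + 1)) := by
  obtain ⟨q, r, hr, rfl⟩ : ∃ q r, r ≤ k ∧ n = (k + 1) * q + r :=
    ⟨_, _, Nat.lt_succ_iff.1 (Nat.mod_lt n k.succ_pos), (Nat.div_add_mod n (k + 1)).symm⟩
  rw [spiral_mul_add q hr]
  rcases hr.lt_or_eq with hlt | rfl
  · rw [add_assoc, spiral_mul_add q hlt]
    have hstep := hadj (k - (r + 1)) (by omega)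
    rw [show k - (r + 1) + 1 = k - r by omega] at hstep
    exact hauto _ _ _ hstep.symm
  · have hround : (r + 1) * q + r + 1 = (r + 1) * (q + 1) + 0 := by ring
    rw [hround, spiral_mul_add _ r.zero_le, Nat.sub_self, Nat.sub_zero, pow_succ, mul_smul]
    exact hauto _ _ _ hjump

end Spiral

theorem block_has_hamiltonian_cycle_general {C V : Type*} [DecidableEq V] [Group C] [MulAction C V]
    [IsCancelSMul C V] {X : SimpleGraph V}
    (hauto : ∀ (a : C) (u w : V), X.Adj u w → X.Adj (a • u) (a • w))
    {c : C} (hc : ∀ a : C, a ∈ Subgroup.zpowers c) {v : ℕ → V} {k : ℕ}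
    (hadj : ∀ i < k, X.Adj (v i) (v (i + 1)))
    (horb : Set.InjOn (fun i => orbit C (v i)) (Set.Iic k))
    (hcard : 3 ≤ Nat.card C * (k + 1)) (hjump : X.Adj (v 0) (c • v k)) :
    ∃ (h0 : v 0 ∈ orbitBlock C v k) (hk : c • v k ∈ orbitBlock C v k) (a : orbitBlock C v k)
      (w : (X.induce (orbitBlock C v k)).Walk a a),
      w.IsHamiltonianCycle ∧
        s((⟨v 0, h0⟩ : orbitBlock C v k), (⟨c • v k, hk⟩ : orbitBlock C v k)) ∈ w.edges := by
  have : Finite C := Nat.finite_of_card_ne_zero fun h => by simp [h] at hcard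
  rw [← orderOf_eq_card_of_forall_mem_zpowers hc] at hcard
  let f (n : ℕ) : orbitBlock C v k := ⟨spiral c v k n, spiral_mem_orbitBlock n⟩
  have hper : f.Periodic (orderOf c * (k + 1)) := fun n => Subtype.ext (spiral_periodic n)
  have hinj : Set.InjOn f (Set.Iio (orderOf c * (k + 1))) := fun m hm n hn h =>
    spiral_injOn horb hm hn (congrArg Subtype.val h)
  have hsurj : f.Surjective := fun w => (exists_spiral_eq hc w.2).imp fun _ => Subtype.ext
  obtain ⟨a, w, hw, hedges⟩ :=
    exists_isHamiltonianCycle_of_periodic (H := X.induce (orbitBlock C v k)) hcard hper hinj hsurj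
      fun n => spiral_adj hauto hadj hjump n
  refine ⟨⟨0, k.zero_le, mem_orbit_self _⟩, ⟨k, le_rfl, mem_orbit _ _⟩, a, w, hw, ?_⟩
  convert hedges k using 3
  · exact Subtype.ext spiral_self.symm
  · exact Subtype.ext spiral_succ_self.symm

/-- blocks have hamiltonian cycles through the bouncing edge.
`X` is a connected, infinite, locally finite graph, `G` acts faithfully and
transitively on `X` by automorphisms, `G'` is cyclic of prime order `p` generated
by `g`, `v : ℤ → V` is a path whose `G'`-orbits are pairwise distinct, `k ≥ 1` and
`v 0` is adjacent to `g • v k`. Then the subgraph induced on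
`⋃_{0 ≤ i ≤ k} G'·v(i)` has a hamiltonian cycle containing the edge from `v 0` to
`g • v k`. -/
theorem block_has_hamiltonian_cycle
    {V : Type*} [Infinite V] [DecidableEq V] (X : SimpleGraph V)
    (hconn : X.Connected) (hlf : ∀ u : V, (X.neighborSet u).Finite)
    (G : Type*) [Group G] [MulAction G V]
    (hauto : ∀ (a : G) (u w : V), X.Adj u w → X.Adj (a • u) (a • w))
    (hfaithful : ∀ a : G, (∀ x : V, a • x = x) → a = 1)
    (htrans : ∀ u w : V, ∃ a : G, a • u = w)
    (p : ℕ) (hp : p.Prime) (hcard : Nat.card (commutator G) = p)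
    (g : G) (hg : Subgroup.zpowers g = commutator G)
    (v : ℤ → V) (hadj : ∀ i : ℤ, X.Adj (v i) (v (i + 1)))
    (horb : ∀ i j : ℤ,
      MulAction.orbit (commutator G) (v i) = MulAction.orbit (commutator G) (v j) → i = j)
    (k : ℕ) (hk : 1 ≤ k)
    (hjump : X.Adj (v 0) (g • v (k : ℤ))) :
    ∃ B : Set V,
      B = {w : V | ∃ i : ℕ, i ≤ k ∧ w ∈ MulAction.orbit (commutator G) (v (i : ℤ))} ∧
      ∃ (hb0 : v 0 ∈ B) (hbk : g • v (k : ℤ) ∈ B) (a : B)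
        (c : (SimpleGraph.induce B X).Walk a a),
        c.IsHamiltonianCycle ∧
        s((⟨v 0, hb0⟩ : B), (⟨g • v (k : ℤ), hbk⟩ : B)) ∈ c.edges := by
  have : FaithfulSMul G V := faithfulSMul_iff.2 hfaithful
  have : IsPretransitive G V := ⟨htrans⟩
  have hgen := forall_mem_zpowers_of_zpowers_eq hg
  have : IsCyclic (commutator G) := ⟨_, hgen⟩
  have : IsCancelSMul (commutator G) V := isCancelSMul_of_normal_of_isCyclic _
  have hsize : 3 ≤ Nat.card (commutator G) * (k + 1) := by
    rw [hcard]
    nlinarith [hp.two_le]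
  exact ⟨_, rfl, block_has_hamiltonian_cycle_general (C := commutator G) (v := fun i => v i)
    (fun a => hauto a) hgen (fun i _ => by exact_mod_cast hadj i)
    (fun i _ j _ h => by exact_mod_cast horb i j h) hsize hjump⟩
end
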